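/- arXiv:2102.02778 — 2 statements merged into one kernel-verified Lean document; each statement's English description precedes it below -/
import Mathlib

section
/- Let n ≥ 3 and let E_n = (ℝⁿ, ‖·‖₂) be the n-dimensional Euclidean space. If Q is any bounded linear projection from C₀¹(B_{E_n}) onto P(²E_n) (the latter viewed as a subspace of C₀¹(B_{E_n}) via restriction of polynomials to the unit ball), then ‖Q‖ ≥ C·(n − 2√2)^{1/5}, where C = (2/5)·((√2 − 1)/3 · π/72)^{1/5}. -/
open Metric Set Real

noncomputable section

/-- The closed unit ball of a normed space, as a pointed metric space. -/
def UBall (X : Type*) [NormedAddCommGroup X] : Set X := Metric.closedBall (0 : X) 1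

/-- The base point of the unit ball. -/
def zeroB (X : Type*) [NormedAddCommGroup X] : ↥(UBall X) :=
  ⟨0, Metric.mem_closedBall_self zero_le_one⟩

/-- `Lip₀(B_X)`: real-valued Lipschitz functions on the closed unit ball vanishing at `0`. -/
def Lip0B (X : Type*) [NormedAddCommGroup X] : Set (↥(UBall X) → ℝ) :=
  {f | (∃ K : NNReal, LipschitzWith K f) ∧ f (zeroB X) = 0}

/-- The image of the space `P(ᵏX)` of `k`-homogeneous polynomials on `X` inside the
functions on the unit ball, via the restriction embedding `P ↦ P↾_{B_X}`. -/
def PhomB (k : ℕ) (X : Type*) [NormedAddCommGroup X] [NormedSpace ℝ X] :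
    Set (↥(UBall X) → ℝ) :=
  {f | ∃ M : ContinuousMultilinearMap ℝ (fun _ : Fin k => X) ℝ,
    ∀ x : ↥(UBall X), f x = M (fun _ => (x : X))}

/-- `C₀¹(B_E)`: functions on the closed unit ball that are continuous on the closed ball,
continuously differentiable on the open ball with uniformly continuous derivative,
and vanish at `0`. -/
def C01B (E : Type*) [NormedAddCommGroup E] [NormedSpace ℝ E] :
    Set (↥(UBall E) → ℝ) :=
  {f | ∃ g : E → ℝ,
    (∀ x : ↥(UBall E), f x = g x) ∧
    ContinuousOn g (UBall E) ∧ g 0 = 0 ∧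
    ∃ g' : E → (E →L[ℝ] ℝ),
      (∀ x ∈ Metric.ball (0 : E) 1, HasFDerivAt g (g' x) x) ∧
      UniformContinuousOn g' (Metric.ball (0 : E) 1)}


lemma c01_add {E : Type*} [NormedAddCommGroup E] [NormedSpace ℝ E] {f g : ↥(UBall E) → ℝ}
    (hf : f ∈ C01B E) (hg : g ∈ C01B E) : f + g ∈ C01B E := by
  obtain ⟨a, h1, h2, h3, a', h4, h5⟩ := hf
  obtain ⟨b, k1, k2, k3, b', k4, k5⟩ := hg
  refine ⟨a + b, fun x => by simp [h1, k1], h2.add k2, by simp [h3, k3], a' + b',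
    fun x hx => (h4 x hx).add (k4 x hx), ?_⟩
  rw [uniformContinuousOn_iff_restrict] at *
  exact UniformContinuous.add h5 k5

lemma c01_smul {E : Type*} [NormedAddCommGroup E] [NormedSpace ℝ E] {f : ↥(UBall E) → ℝ} (c : ℝ)
    (hf : f ∈ C01B E) : c • f ∈ C01B E := by
  obtain ⟨a, h1, h2, h3, a', h4, h5⟩ := hf
  refine ⟨c • a, fun x => by simp [h1], h2.const_smul c, by simp [h3], c • a',
    fun x hx => (h4 x hx).const_smul c, ?_⟩
  rw [uniformContinuousOn_iff_restrict] at *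
  exact UniformContinuous.const_smul h5 c

lemma c01_zero {E : Type*} [NormedAddCommGroup E] [NormedSpace ℝ E] :
    (0 : ↥(UBall E) → ℝ) ∈ C01B E := by
  refine ⟨0, fun x => by simp, continuousOn_const, by simp, 0, fun x hx => ?_, ?_⟩
  · exact hasFDerivAt_const _ _
  · exact uniformContinuous_const.uniformContinuousOn

abbrev WW (E : Type*) [NormedAddCommGroup E] :=
  lp (fun _ : ↥(UBall E) × ↥(UBall E) => ℝ) ⊤

def DD {E : Type*} [NormedAddCommGroup E] (f : ↥(UBall E) → ℝ) (L : NNReal)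
    (h : LipschitzWith L f) : WW E :=
  ⟨fun p => (f p.1 - f p.2) / dist p.1 p.2, by
    apply memℓp_infty
    refine ⟨L, ?_⟩
    rintro _ ⟨p, rfl⟩
    have := h.dist_le_mul p.1 p.2
    rw [Real.dist_eq] at this
    simp only [norm_div, Real.norm_eq_abs, abs_of_nonneg dist_nonneg]
    exact div_le_of_le_mul₀ dist_nonneg L.2 this⟩

lemma DD_apply {E : Type*} [NormedAddCommGroup E] (f : ↥(UBall E) → ℝ) (L : NNReal)
    (h : LipschitzWith L f) (p) : DD f L h p = (f p.1 - f p.2) / dist p.1 p.2 := rfl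

lemma DD_norm {E : Type*} [NormedAddCommGroup E] (f : ↥(UBall E) → ℝ) (L : NNReal)
    (h : LipschitzWith L f) : ‖DD f L h‖ ≤ L := by
  apply lp.norm_le_of_forall_le L.2
  intro p
  have := h.dist_le_mul p.1 p.2
  rw [Real.dist_eq] at this
  rw [DD_apply]
  simp only [norm_div, Real.norm_eq_abs, abs_of_nonneg dist_nonneg]
  exact div_le_of_le_mul₀ dist_nonneg L.2 this

def JJ (E : Type*) [NormedAddCommGroup E] : WW E →ₗ[ℝ] (↥(UBall E) → ℝ) where
  toFun w x := w (x, zeroB E) * dist x (zeroB E)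
  map_add' w v := by ext x; simp [add_mul]
  map_smul' c w := by ext x; simp [mul_assoc]

def GG (E : Type*) [NormedAddCommGroup E] [NormedSpace ℝ E] : Submodule ℝ (WW E) where
  carrier := {w | JJ E w ∈ C01B E ∧ ∀ p, w p * dist p.1 p.2 = JJ E w p.1 - JJ E w p.2}
  add_mem' := by
    rintro w v ⟨h1, h2⟩ ⟨k1, k2⟩
    refine ⟨by rw [map_add]; exact c01_add h1 k1, fun p => ?_⟩
    simp only [map_add, lp.coeFn_add, Pi.add_apply, add_mul, h2, k2]; ring
  zero_mem' := ⟨by rw [map_zero]; exact c01_zero, fun p => by simp⟩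
  smul_mem' := by
    rintro c w ⟨h1, h2⟩
    refine ⟨by rw [map_smul]; exact c01_smul c h1, fun p => ?_⟩
    simp only [map_smul, lp.coeFn_smul, Pi.smul_apply, smul_eq_mul, mul_assoc, h2]; ring

lemma JJ_lip {E : Type*} [NormedAddCommGroup E] [NormedSpace ℝ E] (w : WW E) (hw : w ∈ GG E) :
    LipschitzWith ‖w‖₊ (JJ E w) := by
  apply LipschitzWith.of_dist_le_mul
  intro x y
  rw [Real.dist_eq, ← hw.2 (x, y), abs_mul, abs_of_nonneg dist_nonneg]
  apply mul_le_mul_of_nonneg_right _ dist_nonneg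
  exact lp.norm_apply_le_norm (by simp) w (x, y)

lemma c01_z {E : Type*} [NormedAddCommGroup E] [NormedSpace ℝ E] {f : ↥(UBall E) → ℝ}
    (hf : f ∈ C01B E) : f (zeroB E) = 0 := by
  obtain ⟨a, h1, h2, h3, a', h4, h5⟩ := hf
  rw [h1]; exact h3

lemma JJ_DD {E : Type*} [NormedAddCommGroup E] [NormedSpace ℝ E] {f : ↥(UBall E) → ℝ}
    (hf : f ∈ C01B E) (L : NNReal) (h : LipschitzWith L f) : JJ E (DD f L h) = f := by
  ext x
  change DD f L h (x, zeroB E) * dist x (zeroB E) = f x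
  rw [DD_apply]
  by_cases hx : x = zeroB E
  · subst hx; simp [c01_z hf]
  · have : dist x (zeroB E) ≠ 0 := dist_ne_zero.2 hx
    simp only [c01_z hf]
    field_simp
    simp

lemma DD_mem {E : Type*} [NormedAddCommGroup E] [NormedSpace ℝ E] {f : ↥(UBall E) → ℝ}
    (hf : f ∈ C01B E) (L : NNReal) (h : LipschitzWith L f) : DD f L h ∈ GG E := by
  refine ⟨by rw [JJ_DD hf]; exact hf, fun p => ?_⟩
  rw [JJ_DD hf, DD_apply]
  by_cases hx : p.1 = p.2
  · simp [hx]
  · have : dist p.1 p.2 ≠ 0 := dist_ne_zero.2 hx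
    field_simp

open MeasureTheory Filter Topology in
lemma swap_int {E : Type*} [NormedAddCommGroup E] [NormedSpace ℝ E]
    (l : (↥(UBall E) → ℝ) →ₗ[ℝ] ℝ) (C : NNReal)
    (hl : ∀ f ∈ C01B E, ∀ L : NNReal, LipschitzWith L f → |l f| ≤ C * L)
    {U : Type*} [TopologicalSpace U] [MeasurableSpace U] [OpensMeasurableSpace U]
    [SecondCountableTopology U] (μ : Measure U) (f : U → ↥(UBall E) → ℝ)
    (hf : ∀ u, f u ∈ C01B E) (b : U → NNReal) (hb : ∀ u, LipschitzWith (b u) (f u))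
    (hcont : ∀ u, ∀ ε : NNReal, 0 < ε → ∀ᶠ v in 𝓝 u, LipschitzWith ε (f v - f u))
    (w : U → ℝ) (hw : Continuous w) (hint : Integrable (fun u => |w u| * b u) μ)
    (F : ↥(UBall E) → ℝ) (hF : F ∈ C01B E) (hF' : ∀ x, F x = ∫ u, w u * f u x ∂μ) :
    Integrable (fun u => w u * l (f u)) μ ∧ ∫ u, w u * l (f u) ∂μ = l F := by
  let l0 : GG E →ₗ[ℝ] ℝ := (l ∘ₗ JJ E).domRestrict (GG E)
  have hl0 : ∀ w : GG E, ‖l0 w‖ ≤ C * ‖w‖ := fun w => by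
    have := hl _ w.2.1 _ (JJ_lip w.1 w.2)
    exact this
  obtain ⟨g, hg, -⟩ := exists_extension_norm_eq (GG E) (l0.mkContinuous C hl0)
  have hg' : ∀ w (hw : w ∈ GG E), g w = l (JJ E w) := fun w hw => hg ⟨w, hw⟩
  let D : U → WW E := fun u => DD (f u) (b u) (hb u)
  have hgD : ∀ u, g (D u) = l (f u) := fun u => by
    rw [hg' _ (DD_mem (hf u) _ _), JJ_DD (hf u)]
  have hDc : Continuous D := by
    rw [continuous_iff_continuousAt]
    intro u
    rw [ContinuousAt, Metric.tendsto_nhds]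
    intro ε hε
    have := hcont u ⟨ε/2, by positivity⟩ (by change (0:ℝ) < ε/2; positivity)
    filter_upwards [this] with v hv
    have h1 : D v - D u = DD (f v - f u) _ hv := by
      ext p
      change (f v p.1 - f v p.2) / dist p.1 p.2 - (f u p.1 - f u p.2) / dist p.1 p.2 =
        ((f v p.1 - f u p.1) - (f v p.2 - f u p.2)) / dist p.1 p.2
      ring
    rw [dist_eq_norm, h1]
    exact (DD_norm _ _ hv).trans_lt (by change ε/2 < ε; linarith)
  have hI : Integrable (fun u => w u • D u) μ := by
    refine hint.mono (hw.smul hDc).aestronglyMeasurable ?_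
    filter_upwards with u
    rw [norm_smul, Real.norm_eq_abs, norm_mul, Real.norm_eq_abs, abs_abs, Real.norm_eq_abs,
      abs_of_nonneg (NNReal.coe_nonneg (b u))]
    exact mul_le_mul_of_nonneg_left (DD_norm _ _ _) (abs_nonneg _)
  have hIe : ∀ p, (∫ u, w u • D u ∂μ : WW E) p = ∫ u, w u * ((f u p.1 - f u p.2) / dist p.1 p.2) ∂μ := by
    intro p
    have := (lp.evalCLM ℝ (fun _ : ↥(UBall E) × ↥(UBall E) => ℝ) ⊤ p).integral_comp_comm hI
    exact this.symm
  have hJI : JJ E (∫ u, w u • D u ∂μ) = F := by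
    ext x
    change (∫ u, w u • D u ∂μ : WW E) (x, zeroB E) * dist x (zeroB E) = F x
    rw [hIe, hF', ← integral_mul_const]
    congr 1; ext u
    have := congrFun (JJ_DD (hf u) (b u) (hb u)) x
    change DD _ _ (hb u) (x, zeroB E) * dist x (zeroB E) = f u x at this
    rw [DD_apply] at this
    rw [mul_assoc, this]
  have hfi : ∀ x, Integrable (fun u => w u * f u x) μ := by
    intro x
    have h1 := ((lp.evalCLM ℝ (fun _ : ↥(UBall E) × ↥(UBall E) => ℝ) ⊤ (x, zeroB E)).integrable_comp
      hI).mul_const (dist x (zeroB E))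
    refine h1.congr (ae_of_all _ fun u => ?_)
    have := congrFun (JJ_DD (hf u) (b u) (hb u)) x
    change DD _ _ (hb u) (x, zeroB E) * dist x (zeroB E) = f u x at this
    change w u * DD _ _ (hb u) (x, zeroB E) * dist x (zeroB E) = _
    rw [mul_assoc, this]
  have hIG : (∫ u, w u • D u ∂μ : WW E) ∈ GG E := by
    refine ⟨by rw [hJI]; exact hF, fun p => ?_⟩
    rw [hJI, hIe, hF', hF', ← integral_sub (hfi _) (hfi _), ← integral_mul_const]
    congr 1; ext u
    have := (DD_mem (hf u) (b u) (hb u)).2 p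
    rw [JJ_DD (hf u), DD_apply] at this
    rw [mul_assoc, this]; ring
  have e1 := g.integrable_comp hI
  have e2 := g.integral_comp_comm hI
  simp only [map_smul, hgD, smul_eq_mul] at e1 e2
  refine ⟨e1, ?_⟩
  rw [e2, hg' _ hIG, hJI]

section
open MeasureTheory ProbabilityTheory

lemma g_int_pow (k : ℕ) : Integrable (fun t : ℝ => t ^ k) (gaussianReal 0 1) := by
  rcases Nat.eq_zero_or_pos k with rfl | hk
  · simp
  have h := (memLp_id_gaussianReal' (μ := 0) (v := 1) (k : ENNReal) (by simp)).integrable_norm_pow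
    hk.ne'
  refine h.mono (by fun_prop) (ae_of_all _ fun t => ?_)
  simp

lemma g_stein (k : ℕ) : ∫ t, t ^ (k + 2) ∂(gaussianReal 0 1) =
    (k + 1) * ∫ t, t ^ k ∂(gaussianReal 0 1) := by
  have key : ∀ m : ℕ, Integrable (fun t : ℝ => gaussianPDFReal 0 1 t * t ^ m) := by
    intro m
    have := g_int_pow m
    rw [gaussianReal_of_var_ne_zero _ (by simp),
      integrable_withDensity_iff_integrable_smul' (measurable_gaussianPDF _ _)
      (ae_of_all _ fun _ => gaussianPDF_lt_top)] at this
    simpa [toReal_gaussianPDF] using this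
  have hd : ∀ t : ℝ, HasDerivAt (fun t => gaussianPDFReal 0 1 t * t ^ (k + 1))
      ((k + 1) * (gaussianPDFReal 0 1 t * t ^ k) - gaussianPDFReal 0 1 t * t ^ (k + 2)) t := by
    intro t
    have h1 : HasDerivAt (gaussianPDFReal 0 1) (-t * gaussianPDFReal 0 1 t) t := by
      rw [gaussianPDFReal_def]
      have : HasDerivAt (fun x : ℝ => -(x - 0) ^ 2 / (2 * ((1 : NNReal) : ℝ))) (-t) t := by
        have := ((((hasDerivAt_id t).sub_const 0).pow 2).neg).div_const (2 * ((1 : NNReal) : ℝ))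
        refine this.congr_deriv ?_
        simp
        ring
      refine ((this.exp).const_mul _).congr_deriv ?_
      ring
    have h2 := h1.mul (hasDerivAt_pow (k + 1) t)
    refine h2.congr_deriv ?_
    push_cast
    simp
    ring
  have := integral_eq_zero_of_hasDerivAt_of_integrable hd
    (((key k).const_mul _).sub (key (k + 2))) (key (k + 1))
  rw [integral_sub ((key k).const_mul _) (key (k + 2)), integral_const_mul] at this
  rw [integral_gaussianReal_eq_integral_smul (by simp),
    integral_gaussianReal_eq_integral_smul (by simp)]
  simp only [smul_eq_mul]
  linarith

lemma g_m2 : ∫ t, t ^ 2 ∂(gaussianReal 0 1) = 1 := by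
  rw [g_stein 0]; simp
lemma g_m4 : ∫ t, t ^ 4 ∂(gaussianReal 0 1) = 3 := by
  rw [g_stein 2, g_m2]; norm_num
lemma g_m6 : ∫ t, t ^ 6 ∂(gaussianReal 0 1) = 15 := by
  rw [g_stein 4, g_m4]; norm_num

def hh (t : ℝ) : ℝ := t ^ 2 / (t ^ 2 + 1)

lemma hh_cont : Continuous hh := by
  unfold hh
  exact (continuous_pow 2).div (by fun_prop) (fun t => by positivity)
lemma hh_nonneg (t : ℝ) : 0 ≤ hh t := by unfold hh; positivity
lemma hh_le (t : ℝ) : hh t ≤ 1 := by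
  unfold hh; rw [div_le_one (by positivity)]; linarith

lemma hh_int : Integrable hh (gaussianReal 0 1) := by
  refine (integrable_const (1:ℝ)).mono hh_cont.aestronglyMeasurable (ae_of_all _ fun t => ?_)
  simp [abs_of_nonneg (hh_nonneg t), hh_le]

lemma hh2_int : Integrable (fun t => t ^ 2 * hh t) (gaussianReal 0 1) := by
  refine (g_int_pow 2).mono (by have := hh_cont; fun_prop) (ae_of_all _ fun t => ?_)
  rw [norm_mul, Real.norm_eq_abs (hh t), abs_of_nonneg (hh_nonneg t)]
  exact mul_le_of_le_one_right (norm_nonneg _) (hh_le t)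

lemma beta_nonneg : 0 ≤ ∫ t, hh t ∂(gaussianReal 0 1) := integral_nonneg hh_nonneg

lemma alpha_ge : 1 / 6 ≤ ∫ t, t ^ 2 * hh t ∂(gaussianReal 0 1) - ∫ t, hh t ∂(gaussianReal 0 1) := by
  rw [← integral_sub hh2_int hh_int]
  have hp : ∀ t : ℝ, (-(1/72)) * t ^ 6 + 13/72 * t ^ 4 + ((-23)/72 + 1/2) * t ^ 2 + (11 / 72 - 1/2)
      ≤ t ^ 2 * hh t - hh t := by
    intro t
    have : t ^ 2 * hh t - hh t = (t ^ 2 - 1) * t ^ 2 / (t ^ 2 + 1) := by unfold hh; ring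
    rw [this, le_div_iff₀ (by positivity)]
    have : 0 ≤ (t^2-1)^2 * (t^2-5)^2 := by positivity
    nlinarith
  have hI : Integrable (fun t : ℝ => (-(1/72)) * t ^ 6 + 13/72 * t ^ 4 + ((-23)/72 + 1/2) * t ^ 2
      + (11 / 72 - 1/2)) (gaussianReal 0 1) :=
    ((((g_int_pow 6).const_mul _).add ((g_int_pow 4).const_mul _)).add
      ((g_int_pow 2).const_mul _)).add (integrable_const _)
  have h := integral_mono hI (hh2_int.sub hh_int) hp
  refine le_trans (le_of_eq ?_) h
  have i6 : Integrable (fun t : ℝ => (-(1/72)) * t ^ 6) (gaussianReal 0 1) :=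
    (g_int_pow 6).const_mul _
  have i4 : Integrable (fun t : ℝ => 13/72 * t ^ 4) (gaussianReal 0 1) :=
    (g_int_pow 4).const_mul _
  have i2 : Integrable (fun t : ℝ => ((-23)/72 + 1/2) * t ^ 2) (gaussianReal 0 1) :=
    (g_int_pow 2).const_mul _
  have i64 : Integrable (fun t : ℝ => (-(1/72)) * t ^ 6 + 13/72 * t ^ 4) (gaussianReal 0 1) :=
    i6.add i4
  have i642 : Integrable (fun t : ℝ => (-(1/72)) * t ^ 6 + 13/72 * t ^ 4 +
    ((-23)/72 + 1/2) * t ^ 2) (gaussianReal 0 1) := i64.add i2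
  rw [integral_add i642 (integrable_const _), integral_add i64 i2, integral_add i6 i4]
  simp only [integral_const_mul, g_m2, g_m4, g_m6, integral_const]
  norm_num
end

section
open MeasureTheory ProbabilityTheory

lemma pi_int {ι : Type*} [Fintype ι] [DecidableEq ι] (i0 i j : ι) :
    ∫ y : ι → ℝ, y i * y j * hh (y i0) ∂(Measure.pi fun _ : ι => gaussianReal 0 1) =
      if i = j then (if i = i0 then ∫ t, t ^ 2 * hh t ∂(gaussianReal 0 1)
        else ∫ t, hh t ∂(gaussianReal 0 1)) else 0 := by
  have h1 : ∀ y : ι → ℝ, y i * y j * hh (y i0) = ∏ k, (fun k s => (if k = i then s else 1) *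
      (if k = j then s else 1) * (if k = i0 then hh s else 1)) k (y k) := by
    intro y
    simp only [Finset.prod_mul_distrib]
    simp
  simp_rw [h1]
  rw [integral_fintype_prod_eq_prod (fun k s => (if k = i then s else 1) *
      (if k = j then s else 1) * (if k = i0 then hh s else 1))]
  have hz : ∫ t, t ∂(gaussianReal 0 1) = 0 := integral_id_gaussianReal
  by_cases hij : i = j
  · subst hij
    simp only [if_true]
    by_cases hi : i = i0
    · subst hi
      simp only [if_true]
      rw [Finset.prod_eq_single i]
      · simp only [if_true]
        congr 1; ext t; ring
      · intro k _ hk; simp [hk]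
      · simp
    · simp only [hi, if_false]
      have : ∀ k, ∫ s, (if k = i then s else 1) * (if k = i then s else 1) *
          (if k = i0 then hh s else 1) ∂(gaussianReal 0 1)
          = if k = i0 then ∫ t, hh t ∂(gaussianReal 0 1) else 1 := by
        intro k
        by_cases hk : k = i
        · subst hk
          simp only [if_true, hi, if_false, mul_one]
          rw [← g_m2]; congr 1; ext t; ring
        · simp only [hk, if_false, one_mul]
          by_cases hk0 : k = i0 <;> simp [hk0]
      simp only [this]
      simp
  · simp only [hij, if_false]
    by_cases hi : i = i0
    · have hj : j ≠ i0 := fun h => hij (hi.trans h.symm)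
      apply Finset.prod_eq_zero (Finset.mem_univ j)
      have hji : j ≠ i := fun h => hij h.symm
      simp [hj, hji, hz]
    · apply Finset.prod_eq_zero (Finset.mem_univ i)
      simp [hi, hij, hz]

lemma sg_int_pow (n k : ℕ) : Integrable (fun u : EuclideanSpace ℝ (Fin n) => ‖u‖ ^ k)
    (stdGaussian (EuclideanSpace ℝ (Fin n))) := by
  rcases Nat.eq_zero_or_pos k with rfl | hk
  · simp
  exact (IsGaussian.memLp_id (stdGaussian (EuclideanSpace ℝ (Fin n))) (k : ENNReal)
    (by simp)).integrable_norm_pow hk.ne'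

lemma sg_coord (n : ℕ) (i : Fin n) (k : ℕ) :
    ∫ u : EuclideanSpace ℝ (Fin n), (u i) ^ k ∂(stdGaussian (EuclideanSpace ℝ (Fin n))) =
    ∫ t, t ^ k ∂(gaussianReal 0 1) := by
  rw [← map_pi_eq_stdGaussian, integral_map (by fun_prop) (by fun_prop)]
  simp only
  rw [integral_comp_eval (μ := fun _ : Fin n => gaussianReal 0 1) (f := fun t => t ^ k)
    (by fun_prop)]

lemma sg_coord_int (n : ℕ) (i : Fin n) (k : ℕ) :
    Integrable (fun u : EuclideanSpace ℝ (Fin n) => (u i) ^ k)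
      (stdGaussian (EuclideanSpace ℝ (Fin n))) := by
  refine (sg_int_pow n k).mono (by fun_prop) (ae_of_all _ fun u => ?_)
  rw [norm_pow, norm_pow, norm_norm]
  exact pow_le_pow_left₀ (norm_nonneg _) (PiLp.norm_apply_le u i) k

lemma sg_n2 (n : ℕ) : ∫ u : EuclideanSpace ℝ (Fin n), ‖u‖ ^ 2
    ∂(stdGaussian (EuclideanSpace ℝ (Fin n))) = n := by
  simp_rw [EuclideanSpace.real_norm_sq_eq]
  rw [integral_finsetSum _ (fun i _ => sg_coord_int n i 2)]
  simp [sg_coord, g_m2]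

lemma sg_n4 (n : ℕ) : ∫ u : EuclideanSpace ℝ (Fin n), ‖u‖ ^ 4
    ∂(stdGaussian (EuclideanSpace ℝ (Fin n))) ≤ 3 * n ^ 2 := by
  have h : ∀ u : EuclideanSpace ℝ (Fin n), ‖u‖ ^ 4 ≤ n * ∑ i, (u i) ^ 4 := by
    intro u
    have := sq_sum_le_card_mul_sum_sq (s := Finset.univ) (f := fun i : Fin n => (u i) ^ 2)
    rw [← EuclideanSpace.real_norm_sq_eq] at this
    simp only [← pow_mul, Finset.card_univ, Fintype.card_fin] at this
    simpa using this
  have hi : Integrable (fun u : EuclideanSpace ℝ (Fin n) => n * ∑ i, (u i) ^ 4)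
      (stdGaussian (EuclideanSpace ℝ (Fin n))) :=
    (integrable_finsetSum _ (fun i _ => sg_coord_int n i 4)).const_mul _
  refine (integral_mono (sg_int_pow n 4) hi h).trans (le_of_eq ?_)
  rw [integral_const_mul, integral_finsetSum _ (fun i _ => sg_coord_int n i 4)]
  simp [sg_coord, g_m4]; ring

lemma sg_b (n : ℕ) (hn : 4 ≤ n) : ∫ u : EuclideanSpace ℝ (Fin n), ‖u‖ ^ 2 * (‖u‖ + 2)
    ∂(stdGaussian (EuclideanSpace ℝ (Fin n))) ≤ 3 * n * √n := by
  have hn' : (4:ℝ) ≤ n := by exact_mod_cast hn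
  have hs : 2 ≤ √(n:ℝ) := Real.le_sqrt_of_sq_le (by linarith)
  have hsq : √(n:ℝ) ^ 2 = n := Real.sq_sqrt (by linarith)
  set s := √(n:ℝ)
  have h : ∀ u : EuclideanSpace ℝ (Fin n), ‖u‖ ^ 2 * (‖u‖ + 2) ≤
      (s / 2 + 2) * ‖u‖ ^ 2 + 1 / (2 * s) * ‖u‖ ^ 4 := by
    intro u
    have h0 : 0 ≤ ‖u‖ ^ 2 * (‖u‖ - s) ^ 2 := by positivity
    have : (s / 2 + 2) * ‖u‖ ^ 2 + 1 / (2 * s) * ‖u‖ ^ 4 - ‖u‖ ^ 2 * (‖u‖ + 2)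
       = 1 / (2 * s) * (‖u‖ ^ 2 * (‖u‖ - s) ^ 2) := by
      field_simp; ring
    have : 0 ≤ 1 / (2 * s) * (‖u‖ ^ 2 * (‖u‖ - s) ^ 2) := by positivity
    linarith
  have h2 := (sg_int_pow n 2).const_mul (s / 2 + 2)
  have h4 := (sg_int_pow n 4).const_mul (1 / (2 * s))
  have hl : Integrable (fun u : EuclideanSpace ℝ (Fin n) => ‖u‖ ^ 2 * (‖u‖ + 2))
      (stdGaussian (EuclideanSpace ℝ (Fin n))) := by
    refine ((sg_int_pow n 3).add ((sg_int_pow n 2).const_mul 2)).congr (ae_of_all _ fun u => ?_)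
    simp only [Pi.add_apply]; ring
  refine (integral_mono hl (h2.add h4) h).trans ?_
  simp only [Pi.add_apply]
  rw [integral_add h2 h4, integral_const_mul, integral_const_mul, sg_n2]
  have := mul_le_mul_of_nonneg_left (sg_n4 n) (by positivity : 0 ≤ 1 / (2 * s))
  have e : 1 / (2 * s) * (3 * (n:ℝ) ^ 2) = 3 / 2 * n * s := by
    rw [← hsq]; field_simp
  nlinarith

lemma sg_F (n : ℕ) (e a c : EuclideanSpace ℝ (Fin n)) (he : ‖e‖ = 1) :
    ∫ u : EuclideanSpace ℝ (Fin n), inner ℝ u a * inner ℝ u c * hh (inner ℝ u e)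
      ∂(stdGaussian (EuclideanSpace ℝ (Fin n))) =
    (∫ t, t ^ 2 * hh t ∂(gaussianReal 0 1) - ∫ t, hh t ∂(gaussianReal 0 1))
      * (inner ℝ e a * inner ℝ e c) + (∫ t, hh t ∂(gaussianReal 0 1)) * inner ℝ a c := by
  classical
  have ho : Orthonormal ℝ ((↑) : ({e} : Set (EuclideanSpace ℝ (Fin n))) → EuclideanSpace ℝ (Fin n)) := by
    constructor
    · rintro ⟨x, rfl⟩; exact he
    · rintro ⟨x, rfl⟩ ⟨y, rfl⟩ h; exact absurd rfl h
  obtain ⟨v, b, hv, hb⟩ := ho.exists_orthonormalBasis_extension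
  let i0 : v := ⟨e, by exact_mod_cast hv rfl⟩
  have hi0 : b i0 = e := by rw [hb]
  rw [stdGaussian_eq_map_pi_orthonormalBasis b, integral_map
    (Measurable.aemeasurable (by fun_prop)) (by have := hh_cont; fun_prop)]
  have h1 : ∀ (y : v → ℝ) (z), inner ℝ (∑ i, y i • b i) z = ∑ i, y i * inner ℝ (b i) z := by
    intro y z
    simp [sum_inner, inner_smul_left]
  have h2 : ∀ (y : v → ℝ), inner ℝ (∑ i, y i • b i) e = y i0 := by
    intro y
    rw [h1, ← hi0]
    simp [b.inner_eq_ite]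
  simp_rw [h2, h1, Finset.sum_mul_sum, Finset.sum_mul]
  have hint : ∀ i j, Integrable (fun y : v → ℝ => y i * inner ℝ (b i) a * (y j * inner ℝ (b j) c)
      * hh (y i0)) (Measure.pi fun _ : v => gaussianReal 0 1) := by
    intro i j
    have e2 : ∀ k, Integrable (fun y : v → ℝ => y k ^ 2) (Measure.pi fun _ : v => gaussianReal 0 1) :=
      fun k => integrable_comp_eval (μ := fun _ : v => gaussianReal 0 1) (f := fun t => t ^ 2)
        (g_int_pow 2)
    refine (((e2 i).add (e2 j)).mul_const (|inner ℝ (b i) a| * |inner ℝ (b j) c|)).mono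
      (by have := hh_cont; fun_prop) (ae_of_all _ fun y => ?_)
    simp only [norm_mul, Real.norm_eq_abs, Pi.add_apply, abs_abs]
    rw [abs_of_nonneg (hh_nonneg _), abs_of_nonneg (by positivity : 0 ≤ y i ^ 2 + y j ^ 2)]
    have : |y i| * |y j| ≤ y i ^ 2 + y j ^ 2 := by
      have := sq_nonneg (|y i| - |y j|)
      nlinarith [sq_abs (y i), sq_abs (y j), abs_nonneg (y i), abs_nonneg (y j)]
    calc _ ≤ |y i| * |inner ℝ (b i) a| * (|y j| * |inner ℝ (b j) c|) :=
          mul_le_of_le_one_right (by positivity) (hh_le _)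
      _ = |y i| * |y j| * (|inner ℝ (b i) a| * |inner ℝ (b j) c|) := by ring
      _ ≤ _ := mul_le_mul_of_nonneg_right this (by positivity)
  rw [integral_finsetSum _ (fun i _ => integrable_finsetSum _ (fun j _ => hint i j))]
  simp_rw [integral_finsetSum _ (fun j _ => hint _ j)]
  have h3 : ∀ i j, ∫ y : v → ℝ, y i * inner ℝ (b i) a * (y j * inner ℝ (b j) c) * hh (y i0)
      ∂(Measure.pi fun _ : v => gaussianReal 0 1) = inner ℝ (b i) a * inner ℝ (b j) c *
      if i = j then (if i = i0 then ∫ t, t ^ 2 * hh t ∂(gaussianReal 0 1)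
        else ∫ t, hh t ∂(gaussianReal 0 1)) else 0 := by
    intro i j
    rw [← pi_int i0 i j, ← integral_const_mul]
    congr 1; ext y; ring
  simp_rw [h3]
  set A := ∫ t, t ^ 2 * hh t ∂(gaussianReal 0 1)
  set B := ∫ t, hh t ∂(gaussianReal 0 1)
  have h4 : ∀ i : v, (if i = i0 then A else B) = B + if i = i0 then A - B else 0 := by
    intro i; split_ifs <;> ring
  simp only [mul_ite, mul_zero, Finset.sum_ite_eq, Finset.mem_univ, if_true]
  simp only [← mul_ite, h4, mul_add, Finset.sum_add_distrib]
  simp only [mul_ite, mul_zero, Finset.sum_ite_eq', Finset.mem_univ, if_true, hi0]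
  rw [← Finset.sum_mul, ← b.sum_inner_mul_inner a c]
  simp_rw [real_inner_comm a]
  ring
end

section
open Filter Topology

variable {E : Type*} [NormedAddCommGroup E] [InnerProductSpace ℝ E]

def fU (u x : E) : ℝ := ‖x‖ ^ 2 * (inner ℝ u x) ^ 2 / ((inner ℝ u x) ^ 2 + ‖x‖ ^ 2)

def gU (u x : E) : E →L[ℝ] ℝ :=
  (2 * inner ℝ u x * (‖x‖ ^ 2) ^ 2 / ((inner ℝ u x) ^ 2 + ‖x‖ ^ 2) ^ 2) • innerSL ℝ u +
  (2 * ((inner ℝ u x) ^ 2) ^ 2 / ((inner ℝ u x) ^ 2 + ‖x‖ ^ 2) ^ 2) • innerSL ℝ x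

lemma fU_hom (u x : E) (hx : x ≠ 0) : fU u x = ‖x‖ ^ 2 * hh (inner ℝ u (‖x‖⁻¹ • x)) := by
  have h : ‖x‖ ≠ 0 := norm_ne_zero_iff.2 hx
  have h2 : (inner ℝ u x) ^ 2 + ‖x‖ ^ 2 ≠ 0 := by positivity
  unfold fU hh
  rw [inner_smul_right]
  field_simp

lemma fU_nonneg (u x : E) : 0 ≤ fU u x := by unfold fU; positivity

lemma fU_le (u x : E) : fU u x ≤ ‖x‖ ^ 2 := by
  by_cases hx : x = 0
  · simp [hx, fU]
  · rw [fU_hom u x hx]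
    exact mul_le_of_le_one_right (by positivity) (hh_le _)

lemma gU_norm (u x : E) : ‖gU u x‖ ≤ (‖u‖ + 2) * ‖x‖ := by
  by_cases hx : x = 0
  · simp [hx, gU]
  have hr : 0 < ‖x‖ := norm_pos_iff.2 hx
  unfold gU
  set t := inner ℝ u x
  set r := ‖x‖
  have h2 : 0 < t ^ 2 + r ^ 2 := by positivity
  refine (norm_add_le _ _).trans ?_
  rw [norm_smul, norm_smul, innerSL_apply_norm, innerSL_apply_norm]
  have a1 : ‖2 * t * (r ^ 2) ^ 2 / (t ^ 2 + r ^ 2) ^ 2‖ ≤ r := by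
    rw [norm_div, norm_mul, norm_mul, Real.norm_eq_abs, Real.norm_eq_abs, Real.norm_eq_abs,
      Real.norm_eq_abs, abs_of_nonneg (by positivity : 0 ≤ (r^2)^2),
      abs_of_nonneg (by positivity : 0 ≤ (t ^ 2 + r ^ 2) ^ 2), div_le_iff₀ (by positivity),
      abs_of_pos (by norm_num : (0:ℝ) < 2)]
    have e1 : 2 * |t| * r ≤ t ^ 2 + r ^ 2 := by nlinarith [sq_nonneg (|t| - r), sq_abs t]
    have e2 : r ^ 2 ≤ t ^ 2 + r ^ 2 := by nlinarith [sq_nonneg t]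
    calc 2 * |t| * (r ^ 2) ^ 2 = r * ((2 * |t| * r) * r ^ 2) := by ring
      _ ≤ r * ((t ^ 2 + r ^ 2) * (t ^ 2 + r ^ 2)) := by gcongr
      _ = _ := by ring
  have a2 : ‖2 * (t ^ 2) ^ 2 / (t ^ 2 + r ^ 2) ^ 2‖ ≤ 2 := by
    rw [Real.norm_eq_abs, abs_of_nonneg (by positivity), div_le_iff₀ (by positivity)]
    have e2 : t ^ 2 ≤ t ^ 2 + r ^ 2 := by nlinarith [sq_nonneg r]
    gcongr
  have := mul_le_mul_of_nonneg_right a1 (norm_nonneg u)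
  have := mul_le_mul_of_nonneg_right a2 hr.le
  change _ * ‖u‖ + _ * r ≤ _
  linarith

lemma fU_deriv (u x : E) : HasFDerivAt (fU u) (gU u x) x := by
  by_cases hx : x = 0
  · subst hx
    have h0 : gU u (0:E) = 0 := by simp [gU]
    rw [h0, hasFDerivAt_iff_isLittleO_nhds_zero]
    have : (fun h : E => fU u (0 + h) - fU u 0 - (0 : E →L[ℝ] ℝ) h) =O[𝓝 0]
        fun h => ‖h‖ ^ 2 := by
      refine Asymptotics.IsBigO.of_bound 1 (Eventually.of_forall fun h => ?_)
      have : fU u (0:E) = 0 := by simp [fU]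
      simp [this, abs_of_nonneg (fU_nonneg u h), fU_le]
    refine this.trans_isLittleO ?_
    exact Asymptotics.isLittleO_norm_pow_id one_lt_two
  · have hr : 0 < ‖x‖ := norm_pos_iff.2 hx
    have h2 : (inner ℝ u x) ^ 2 + ‖x‖ ^ 2 ≠ 0 := by positivity
    have d1 : HasFDerivAt (fun x : E => inner ℝ u x) (innerSL ℝ u) x := (innerSL ℝ u).hasFDerivAt
    have d2 : HasFDerivAt (fun x : E => ‖x‖ ^ 2) (2 • innerSL ℝ x) x :=
      (hasStrictFDerivAt_norm_sq x).hasFDerivAt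
    have d3 := d1.pow 2
    have d5 := (hasDerivAt_inv h2).comp_hasFDerivAt x (d3.add d2)
    have d4 := (d2.mul d3).mul d5
    have hfe : fU u = fun x : E => ‖x‖ ^ 2 * (inner ℝ u x) ^ 2 *
        ((inner ℝ u x) ^ 2 + ‖x‖ ^ 2)⁻¹ := by
      ext y; rw [fU, div_eq_mul_inv]
    rw [hfe]
    refine HasFDerivAt.congr_fderiv d4 ?_
    ext y
    simp only [gU, _root_.add_apply, _root_.smul_apply,
      innerSL_apply_apply, smul_eq_mul, nsmul_eq_mul, Pi.mul_apply,
      Pi.add_apply, Function.comp_apply]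
    field_simp
    push_cast
    ring

lemma gU_cont : Continuous (fun p : E × E => gU p.1 p.2) := by
  rw [continuous_iff_continuousAt]
  rintro ⟨u, x⟩
  by_cases hx : x = 0
  · subst hx
    have h0 : gU u (0:E) = 0 := by simp [gU]
    rw [ContinuousAt, h0]
    apply squeeze_zero_norm (a := fun p : E × E => (‖p.1‖ + 2) * ‖p.2‖)
      (fun p => gU_norm p.1 p.2)
    have : Continuous (fun p : E × E => (‖p.1‖ + 2) * ‖p.2‖) := by fun_prop
    simpa using this.tendsto (u, 0)
  · have hr : 0 < ‖x‖ := norm_pos_iff.2 hx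
    have h2 : ((inner ℝ u x) ^ 2 + ‖x‖ ^ 2) ^ 2 ≠ 0 := by positivity
    unfold gU
    have c1 : Continuous (fun p : E × E => inner ℝ p.1 p.2) := by fun_prop
    have c2 : Continuous (fun p : E × E => ‖p.2‖ ^ 2) := by fun_prop
    have c3 : Continuous (fun p : E × E => innerSL ℝ p.1) := by fun_prop
    have c4 : Continuous (fun p : E × E => innerSL ℝ p.2) := by fun_prop
    have c5 : ContinuousAt (fun p : E × E => 2 * inner ℝ p.1 p.2 * (‖p.2‖ ^ 2) ^ 2 /
        ((inner ℝ p.1 p.2) ^ 2 + ‖p.2‖ ^ 2) ^ 2) (u, x) :=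
      ContinuousAt.div ((continuous_const.mul c1).mul (c2.pow 2)).continuousAt
        (((c1.pow 2).add c2).pow 2).continuousAt h2
    have c6 : ContinuousAt (fun p : E × E => 2 * ((inner ℝ p.1 p.2) ^ 2) ^ 2 /
        ((inner ℝ p.1 p.2) ^ 2 + ‖p.2‖ ^ 2) ^ 2) (u, x) :=
      ContinuousAt.div (continuous_const.mul ((c1.pow 2).pow 2)).continuousAt
        (((c1.pow 2).add c2).pow 2).continuousAt h2
    exact (c5.smul c3.continuousAt).add (c6.smul c4.continuousAt)

def fB (u : E) : ↥(UBall E) → ℝ := fun x => fU u x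

lemma c01_of_deriv [FiniteDimensional ℝ E] (g : E → ℝ) (g' : E → E →L[ℝ] ℝ)
    (hg : ∀ x, HasFDerivAt g (g' x) x) (hg' : Continuous g') (h0 : g 0 = 0) :
    (fun x : ↥(UBall E) => g x) ∈ C01B E := by
  have := FiniteDimensional.proper ℝ E
  refine ⟨g, fun x => rfl, ?_, h0, g', fun x _ => hg x, ?_⟩
  · exact fun x _ => (hg x).continuousAt.continuousWithinAt
  · exact ((isCompact_closedBall (0:E) 1).uniformContinuousOn_of_continuous
      hg'.continuousOn).mono Metric.ball_subset_closedBall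

lemma fB_c01 [FiniteDimensional ℝ E] (u : E) : fB u ∈ C01B E :=
  c01_of_deriv (fU u) (gU u) (fU_deriv u) (gU_cont.comp (by fun_prop : Continuous fun x : E => (u, x)))
    (by simp [fU])

lemma lip_of_deriv (g : E → ℝ) (g' : E → E →L[ℝ] ℝ)
    (hg : ∀ x, HasFDerivAt g (g' x) x) (L : NNReal) (hL : ∀ x ∈ UBall E, ‖g' x‖ ≤ L) :
    LipschitzWith L (fun x : ↥(UBall E) => g x) := by
  apply LipschitzWith.of_dist_le_mul
  intro x y
  have := (convex_closedBall (0:E) 1).norm_image_sub_le_of_norm_hasFDerivWithin_le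
    (fun z _ => (hg z).hasFDerivWithinAt) hL y.2 x.2
  rw [dist_eq_norm, Subtype.dist_eq, dist_eq_norm]
  exact this

lemma fB_lip (u : E) : LipschitzWith (‖u‖₊ + 2) (fB u) := by
  apply lip_of_deriv (fU u) (gU u) (fU_deriv u)
  intro x hx
  have hx' : ‖x‖ ≤ 1 := by simpa [UBall] using hx
  refine (gU_norm u x).trans ?_
  push_cast
  exact mul_le_of_le_one_right (by positivity) hx'

lemma fB_cont [FiniteDimensional ℝ E] (u : E) (ε : NNReal) (hε : 0 < ε) :
    ∀ᶠ v in 𝓝 u, LipschitzWith ε (fB v - fB u) := by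
  have := FiniteDimensional.proper ℝ E
  have : CompactSpace ↥(UBall E) := isCompact_iff_compactSpace.1 (isCompact_closedBall (0:E) 1)
  let H : C(E × ↥(UBall E), E →L[ℝ] ℝ) := ⟨fun p => gU p.1 p.2,
    gU_cont.comp (by fun_prop : Continuous fun p : E × ↥(UBall E) => (p.1, (p.2 : E)))⟩
  have h0 := (H.curry.continuous.tendsto u)
  rw [ContinuousMap.tendsto_iff_tendstoUniformly] at h0
  have h := Metric.tendstoUniformly_iff.1 h0 (ε : ℝ) (NNReal.coe_pos.2 hε)
  filter_upwards [h] with v hv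
  apply lip_of_deriv (fun x => fU v x - fU u x) (fun x => gU v x - gU u x)
    (fun x => (fU_deriv v x).sub (fU_deriv u x))
  intro x hx
  rw [← dist_eq_norm, dist_comm]
  exact (hv ⟨x, hx⟩).le
end

section
open MeasureTheory ProbabilityTheory

lemma quad_rep {E : Type*} [NormedAddCommGroup E] [NormedSpace ℝ E] {f : ↥(UBall E) → ℝ}
    (hf : f ∈ PhomB 2 E) : ∃ B : E →ₗ[ℝ] E →ₗ[ℝ] ℝ, ∀ x : ↥(UBall E), f x = B x x := by
  obtain ⟨M, hM⟩ := hf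
  refine ⟨LinearMap.mk₂ ℝ (fun x y => (continuousMultilinearCurryFin1 ℝ E ℝ) (M.curryLeft x) y)
    (by intros; simp only [map_add]; rfl) (by intros; simp only [map_smul]; rfl)
    (by intros; simp only [map_add]) (by intros; simp only [map_smul]), fun x => ?_⟩
  rw [hM, LinearMap.mk₂_apply, continuousMultilinearCurryFin1_apply,
    ContinuousMultilinearMap.curryLeft_apply]
  congr 1
  ext i
  fin_cases i <;> rfl

lemma quad_sum {n : ℕ} (B : EuclideanSpace ℝ (Fin n) →ₗ[ℝ] EuclideanSpace ℝ (Fin n) →ₗ[ℝ] ℝ)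
    (u : EuclideanSpace ℝ (Fin n)) :
    B u u = ∑ i, ∑ j, u i * u j * B (EuclideanSpace.single i 1) (EuclideanSpace.single j 1) := by
  have hu : u = ∑ i, u i • (EuclideanSpace.single i 1 : EuclideanSpace ℝ (Fin n)) := by
    simpa using ((EuclideanSpace.basisFun (Fin n) ℝ).sum_repr u).symm
  conv_lhs => rw [hu]
  simp only [map_sum, map_smul, LinearMap.sum_apply, LinearMap.smul_apply, smul_eq_mul,
    Finset.mul_sum, mul_assoc]
  rw [Finset.sum_comm]
  refine Finset.sum_congr rfl fun i _ => Finset.sum_congr rfl fun j _ => ?_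
  ring

def pt {n : ℕ} (s : ℝ) (hs : |s| ≤ 1) (i j : Fin n) : ↥(UBall (EuclideanSpace ℝ (Fin n))) :=
  ⟨(1 / 2 : ℝ) • (EuclideanSpace.single i 1 + s • EuclideanSpace.single j 1), by
    rw [UBall, mem_closedBall_zero_iff, norm_smul]
    have := norm_add_le (EuclideanSpace.single i 1 : EuclideanSpace ℝ (Fin n))
      (s • EuclideanSpace.single j 1)
    rw [norm_smul, EuclideanSpace.norm_single, EuclideanSpace.norm_single] at this
    simp at this ⊢
    linarith⟩

def pp {n : ℕ} (i j : Fin n) := pt (n := n) 1 (by simp) i j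
def pm {n : ℕ} (i j : Fin n) := pt (n := n) (-1) (by simp) i j

lemma pp_val {n : ℕ} (i j : Fin n) : (pp i j : EuclideanSpace ℝ (Fin n)) =
  (1 / 2 : ℝ) • (EuclideanSpace.single i 1 + (1:ℝ) • EuclideanSpace.single j 1) := rfl
lemma pm_val {n : ℕ} (i j : Fin n) : (pm i j : EuclideanSpace ℝ (Fin n)) =
  (1 / 2 : ℝ) • (EuclideanSpace.single i 1 + (-1:ℝ) • EuclideanSpace.single j 1) := rfl

lemma pp_pm_dist {n : ℕ} (i j : Fin n) : dist (pp i j) (pm i j) = 1 := by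
  rw [Subtype.dist_eq, pp_val, pm_val, dist_eq_norm]
  have : (1 / 2 : ℝ) • (EuclideanSpace.single i 1 + (1:ℝ) • EuclideanSpace.single j 1) -
    (1 / 2 : ℝ) • (EuclideanSpace.single i 1 + (-1:ℝ) • EuclideanSpace.single j 1) =
    (EuclideanSpace.single j 1 : EuclideanSpace ℝ (Fin n)) := by module
  rw [this]; simp

def FF {n : ℕ} (a b : ℝ) (i j : Fin n) (x : EuclideanSpace ℝ (Fin n)) : ℝ :=
  a * (x i * x j) + b * (if i = j then ‖x‖ ^ 2 else 0)

def MP {n : ℕ} (i j : Fin n) :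
    ContinuousMultilinearMap ℝ (fun _ : Fin 2 => EuclideanSpace ℝ (Fin n)) ℝ :=
  (ContinuousMultilinearMap.mkPiAlgebra ℝ (Fin 2) ℝ).compContinuousLinearMap
    ![EuclideanSpace.proj i, EuclideanSpace.proj j]

lemma MP_apply {n : ℕ} (i j : Fin n) (x : EuclideanSpace ℝ (Fin n)) :
    MP i j (fun _ => x) = x i * x j := by
  simp [MP, Fin.prod_univ_two]

lemma FF_rep {n : ℕ} (a b : ℝ) (i j : Fin n) :
    ∃ M : ContinuousMultilinearMap ℝ (fun _ : Fin 2 => EuclideanSpace ℝ (Fin n)) ℝ,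
    ∀ x, FF a b i j x = M (fun _ => x) := by
  refine ⟨a • MP i j + (if i = j then b else 0) • ∑ k, MP k k, fun x => ?_⟩
  simp only [ContinuousMultilinearMap.add_apply, ContinuousMultilinearMap.smul_apply,
    ContinuousMultilinearMap.sum_apply, MP_apply, smul_eq_mul, FF]
  rw [EuclideanSpace.real_norm_sq_eq]
  simp only [← sq]
  split_ifs <;> simp

lemma FF_phom {n : ℕ} (a b : ℝ) (i j : Fin n) :
    (fun x : ↥(UBall (EuclideanSpace ℝ (Fin n))) => FF a b i j x) ∈
      PhomB 2 (EuclideanSpace ℝ (Fin n)) := by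
  obtain ⟨M, hM⟩ := FF_rep a b i j
  exact ⟨M, fun x => hM x⟩

lemma FF_c01 {n : ℕ} (a b : ℝ) (i j : Fin n) :
    (fun x : ↥(UBall (EuclideanSpace ℝ (Fin n))) => FF a b i j x) ∈
      C01B (EuclideanSpace ℝ (Fin n)) := by
  obtain ⟨M, hM⟩ := FF_rep a b i j
  have hc : ContDiff ℝ 1 (FF a b i j) := by
    have : FF a b i j = fun x => M (fun _ => x) := funext hM
    rw [this]
    exact M.contDiff.comp (contDiff_pi.2 fun _ => contDiff_id)
  exact c01_of_deriv (FF a b i j) (fderiv ℝ (FF a b i j))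
    (fun x => (hc.differentiable (by simp) x).hasFDerivAt) (hc.continuous_fderiv (by simp))
    (by simp [FF])

lemma FF_int {n : ℕ} (i j : Fin n) (x : EuclideanSpace ℝ (Fin n)) :
    FF (∫ t, t ^ 2 * hh t ∂(gaussianReal 0 1) - ∫ t, hh t ∂(gaussianReal 0 1))
      (∫ t, hh t ∂(gaussianReal 0 1)) i j x =
    ∫ u : EuclideanSpace ℝ (Fin n), u i * u j * fU u x
      ∂(stdGaussian (EuclideanSpace ℝ (Fin n))) := by
  by_cases hx : x = 0
  · simp [hx, FF, fU]
  have hr : ‖x‖ ≠ 0 := norm_ne_zero_iff.2 hx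
  have h := sg_F n (‖x‖⁻¹ • x) (EuclideanSpace.single i 1) (EuclideanSpace.single j 1)
    (by rw [norm_smul, norm_inv, norm_norm, inv_mul_cancel₀ hr])
  have e1 : ∀ u : EuclideanSpace ℝ (Fin n), u i * u j * fU u x = ‖x‖ ^ 2 *
      (inner ℝ u (EuclideanSpace.single i 1) * inner ℝ u (EuclideanSpace.single j 1) *
        hh (inner ℝ u (‖x‖⁻¹ • x))) := by
    intro u
    rw [fU_hom u x hx]
    simp [EuclideanSpace.inner_single_right]
    ring
  simp_rw [e1]
  rw [integral_const_mul, h]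
  generalize (∫ t, t ^ 2 * hh t ∂(gaussianReal 0 1) - ∫ t, hh t ∂(gaussianReal 0 1)) = A
  generalize (∫ t, hh t ∂(gaussianReal 0 1)) = B
  have i1 : ∀ k : Fin n, inner ℝ (‖x‖⁻¹ • x) (EuclideanSpace.single k (1:ℝ)) = ‖x‖⁻¹ * x k := by
    intro k
    simp [EuclideanSpace.inner_single_right]
  have i2 : inner ℝ (EuclideanSpace.single i (1:ℝ)) (EuclideanSpace.single j (1:ℝ)) =
      if i = j then (1:ℝ) else 0 := by
    rw [EuclideanSpace.inner_single_right, PiLp.single_apply]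
    simp [eq_comm]
  rw [i1, i1, i2, FF]
  by_cases hij : i = j
  · rw [if_pos hij, if_pos hij]; field_simp
  · rw [if_neg hij, if_neg hij]; field_simp; ring

lemma main_ineq (n : ℕ) (hn : 4 ≤ n)
    (Q : (↥(UBall (EuclideanSpace ℝ (Fin n))) → ℝ) →ₗ[ℝ]
         (↥(UBall (EuclideanSpace ℝ (Fin n))) → ℝ))
    (hrange : ∀ f ∈ C01B (EuclideanSpace ℝ (Fin n)), Q f ∈ PhomB 2 (EuclideanSpace ℝ (Fin n)))
    (hproj : ∀ f ∈ PhomB 2 (EuclideanSpace ℝ (Fin n)), Q f = f)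
    (K : NNReal)
    (hK : ∀ f ∈ C01B (EuclideanSpace ℝ (Fin n)), ∀ L : NNReal,
      LipschitzWith L f → LipschitzWith (K * L) (Q f)) :
    √n ≤ 36 * K := by
  set α := ∫ t, t ^ 2 * hh t ∂(gaussianReal 0 1) - ∫ t, hh t ∂(gaussianReal 0 1) with hα
  set β := ∫ t, hh t ∂(gaussianReal 0 1) with hβ
  have hα6 : 1 / 6 ≤ α := alpha_ge
  have hβ0 : 0 ≤ β := beta_nonneg
  let l : Fin n → Fin n → (↥(UBall (EuclideanSpace ℝ (Fin n))) → ℝ) →ₗ[ℝ] ℝ := fun i j =>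
    (LinearMap.proj (R := ℝ) (φ := fun _ : ↥(UBall (EuclideanSpace ℝ (Fin n))) => ℝ) (pp i j) -
      LinearMap.proj (R := ℝ) (φ := fun _ : ↥(UBall (EuclideanSpace ℝ (Fin n))) => ℝ) (pm i j)) ∘ₗ Q
  have hl : ∀ i j f, l i j f = Q f (pp i j) - Q f (pm i j) := fun i j f => rfl
  have hlb : ∀ i j, ∀ f ∈ C01B (EuclideanSpace ℝ (Fin n)), ∀ L : NNReal,
      LipschitzWith L f → |l i j f| ≤ K * L := by
    intro i j f hf L hL
    have := (hK f hf L hL).dist_le_mul (pp i j) (pm i j)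
    rw [pp_pm_dist, Real.dist_eq, mul_one] at this
    rw [hl]; exact_mod_cast this
  let μ := stdGaussian (EuclideanSpace ℝ (Fin n))
  have hbi : Integrable (fun u : EuclideanSpace ℝ (Fin n) => ‖u‖ ^ 2 * (‖u‖ + 2)) μ := by
    refine ((sg_int_pow n 3).add ((sg_int_pow n 2).const_mul 2)).congr (ae_of_all _ fun u => ?_)
    simp only [Pi.add_apply]; ring
  have hsw : ∀ i j, Integrable (fun u : EuclideanSpace ℝ (Fin n) => u i * u j * l i j (fB u)) μ ∧
      ∫ u : EuclideanSpace ℝ (Fin n), u i * u j * l i j (fB u) ∂μ =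
        l i j (fun x => FF α β i j x) := by
    intro i j
    refine swap_int (l i j) K (hlb i j) μ fB fB_c01 (fun u => ‖u‖₊ + 2) fB_lip fB_cont
      (fun u => u i * u j) (by fun_prop) ?_ _ (FF_c01 α β i j) (fun x => FF_int i j x)
    refine hbi.mono (by fun_prop) (ae_of_all _ fun u => ?_)
    have h1 := PiLp.norm_apply_le u i
    have h2 := PiLp.norm_apply_le u j
    rw [Real.norm_eq_abs] at h1 h2
    have h0 : 0 ≤ ‖u‖ := norm_nonneg u
    push_cast
    simp only [Real.norm_eq_abs, abs_mul, abs_abs]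
    rw [abs_of_nonneg (by positivity : 0 ≤ ‖u‖ + 2), abs_of_nonneg (by positivity : 0 ≤ ‖u‖ ^ 2)]
    apply mul_le_mul_of_nonneg_right _ (by positivity)
    rw [sq]
    exact mul_le_mul h1 h2 (abs_nonneg _) h0
  -- lower bound
  have hlow : ∀ i j, α / 2 ≤ l i j (fun x => FF α β i j x) := by
    intro i j
    rw [hl, hproj _ (FF_phom α β i j)]
    simp only [FF, pp_val, pm_val]
    by_cases hij : i = j
    · subst hij
      have e1 : (1 / 2 : ℝ) • (EuclideanSpace.single i 1 + (1:ℝ) • EuclideanSpace.single i 1) =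
        (EuclideanSpace.single i 1 : EuclideanSpace ℝ (Fin n)) := by module
      have e2 : (1 / 2 : ℝ) • (EuclideanSpace.single i 1 + (-1:ℝ) • EuclideanSpace.single i 1) =
        (0 : EuclideanSpace ℝ (Fin n)) := by module
      rw [e1, e2]
      simp
      linarith
    · have hji : j ≠ i := fun h => hij h.symm
      simp [hij, hji]
      linarith
  have hsum : (n : ℝ) ^ 2 * (α / 2) ≤ ∑ i, ∑ j, l i j (fun x => FF α β i j x) := by
    calc (n : ℝ) ^ 2 * (α / 2) = ∑ i : Fin n, ∑ j : Fin n, α / 2 := by simp; ring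
      _ ≤ _ := Finset.sum_le_sum fun i _ => Finset.sum_le_sum fun j _ => hlow i j
  have hup : ∀ u : EuclideanSpace ℝ (Fin n), ∑ i, ∑ j, u i * u j * l i j (fB u) ≤
      K * (‖u‖ ^ 2 * (‖u‖ + 2)) := by
    intro u
    obtain ⟨B, hB⟩ := quad_rep (hrange _ (fB_c01 u))
    have hlB : ∀ i j, l i j (fB u) =
        (B (EuclideanSpace.single i 1) (EuclideanSpace.single j 1) +
          B (EuclideanSpace.single j 1) (EuclideanSpace.single i 1)) / 2 := by
      intro i j
      rw [hl, hB, hB, pp_val, pm_val]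
      simp only [map_add, map_smul, LinearMap.add_apply, LinearMap.smul_apply, smul_eq_mul]
      ring
    have hBu : ∑ i, ∑ j, u i * u j * l i j (fB u) = B u u := by
      have q1 := quad_sum B u
      have q2 := q1
      rw [Finset.sum_comm] at q2
      have : ∑ i, ∑ j, u i * u j * l i j (fB u) = (B u u + B u u) / 2 := by
        conv_rhs => rw [q2]
        conv_rhs => lhs; rhs; rw [← q2, q1]
        rw [← Finset.sum_add_distrib, Finset.sum_div]
        refine Finset.sum_congr rfl fun i _ => ?_
        rw [← Finset.sum_add_distrib, Finset.sum_div]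
        refine Finset.sum_congr rfl fun j _ => ?_
        rw [hlB]; ring
      rw [this]; ring
    rw [hBu]
    by_cases hu : u = 0
    · subst hu; simp
    have hr : ‖u‖ ≠ 0 := norm_ne_zero_iff.2 hu
    have hn1 : ‖‖u‖⁻¹ • u‖ = 1 := by rw [norm_smul, norm_inv, norm_norm, inv_mul_cancel₀ hr]
    let x : ↥(UBall (EuclideanSpace ℝ (Fin n))) := ⟨‖u‖⁻¹ • u, by
      rw [UBall, mem_closedBall_zero_iff, hn1]⟩
    have h1 := (hK _ (fB_c01 u) _ (fB_lip u)).dist_le_mul x (zeroB _)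
    have h2 : dist x (zeroB (EuclideanSpace ℝ (Fin n))) = 1 := by
      rw [Subtype.dist_eq]; change dist (‖u‖⁻¹ • u) 0 = 1
      rw [dist_zero_right, hn1]
    rw [h2, hB, hB, Real.dist_eq] at h1
    have h3 : B (zeroB (EuclideanSpace ℝ (Fin n))) (zeroB (EuclideanSpace ℝ (Fin n))) = 0 := by
      change B 0 0 = 0
      simp
    have h4 : B u u = ‖u‖ ^ 2 * B x x := by
      change _ = ‖u‖ ^ 2 * B (‖u‖⁻¹ • u) (‖u‖⁻¹ • u)
      simp only [map_smul, LinearMap.smul_apply, smul_eq_mul]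
      field_simp
    rw [h3, sub_zero, mul_one] at h1
    push_cast at h1
    have h5 := (le_abs_self _).trans h1
    rw [h4]
    have := mul_le_mul_of_nonneg_left h5 (by positivity : 0 ≤ ‖u‖ ^ 2)
    linarith
  have htot : ∑ i, ∑ j, l i j (fun x => FF α β i j x) =
      ∫ u : EuclideanSpace ℝ (Fin n), ∑ i, ∑ j, u i * u j * l i j (fB u) ∂μ := by
    rw [integral_finsetSum _ (fun i _ => integrable_finsetSum _ (fun j _ => (hsw i j).1))]
    refine Finset.sum_congr rfl fun i _ => ?_
    rw [integral_finsetSum _ (fun j _ => (hsw i j).1)]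
    exact Finset.sum_congr rfl fun j _ => (hsw i j).2.symm
  have hfin : ∫ u : EuclideanSpace ℝ (Fin n), ∑ i, ∑ j, u i * u j * l i j (fB u) ∂μ ≤
      K * (3 * n * √n) := by
    refine (integral_mono (integrable_finsetSum _ (fun i _ => integrable_finsetSum _
      (fun j _ => (hsw i j).1))) (hbi.const_mul (K:ℝ)) hup).trans ?_
    rw [integral_const_mul]
    exact mul_le_mul_of_nonneg_left (sg_b n hn) K.2
  have hn' : (4:ℝ) ≤ n := by exact_mod_cast hn
  have hs : 2 ≤ √(n:ℝ) := Real.le_sqrt_of_sq_le (by linarith)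
  have hsq : √(n:ℝ) ^ 2 = n := Real.sq_sqrt (by linarith)
  have h1 : (n : ℝ) ^ 2 * (1 / 12) ≤ K * (3 * n * √n) := by
    have : (n : ℝ) ^ 2 * (1 / 12) ≤ (n : ℝ) ^ 2 * (α / 2) := by
      apply mul_le_mul_of_nonneg_left _ (by positivity); linarith
    linarith
  generalize √(n:ℝ) = s at *
  rw [← hsq] at h1
  have h2 : s ^ 3 * s ≤ s ^ 3 * (36 * K) := by nlinarith
  exact le_of_mul_le_mul_left h2 (by positivity)

lemma half_le (n : ℕ) (hn : 3 ≤ n)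
    (Q : (↥(UBall (EuclideanSpace ℝ (Fin n))) → ℝ) →ₗ[ℝ]
         (↥(UBall (EuclideanSpace ℝ (Fin n))) → ℝ))
    (hproj : ∀ f ∈ PhomB 2 (EuclideanSpace ℝ (Fin n)), Q f = f)
    (K : NNReal)
    (hK : ∀ f ∈ C01B (EuclideanSpace ℝ (Fin n)), ∀ L : NNReal,
      LipschitzWith L f → LipschitzWith (K * L) (Q f)) :
    (1 / 2 : ℝ) ≤ K := by
  let i : Fin n := ⟨0, by omega⟩
  let f : ↥(UBall (EuclideanSpace ℝ (Fin n))) → ℝ := fun x => FF 1 0 i i x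
  have hL : LipschitzWith 2 f := by
    apply LipschitzWith.of_dist_le_mul
    intro x y
    simp only [f, FF, zero_mul, add_zero, one_mul]
    rw [Real.dist_eq, Subtype.dist_eq, dist_eq_norm]
    have e : (x:EuclideanSpace ℝ (Fin n)) i * (x:EuclideanSpace ℝ (Fin n)) i -
      (y:EuclideanSpace ℝ (Fin n)) i * (y:EuclideanSpace ℝ (Fin n)) i =
      ((x:EuclideanSpace ℝ (Fin n)) i + (y:EuclideanSpace ℝ (Fin n)) i) *
      ((x:EuclideanSpace ℝ (Fin n)) - (y:EuclideanSpace ℝ (Fin n))) i := by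
      simp; ring
    rw [e, abs_mul]
    have h1 := PiLp.norm_apply_le ((x:EuclideanSpace ℝ (Fin n)) - (y:EuclideanSpace ℝ (Fin n))) i
    have h2 := PiLp.norm_apply_le (x:EuclideanSpace ℝ (Fin n)) i
    have h3 := PiLp.norm_apply_le (y:EuclideanSpace ℝ (Fin n)) i
    have h4 := mem_closedBall_zero_iff.1 x.2
    have h5 := mem_closedBall_zero_iff.1 y.2
    rw [Real.norm_eq_abs] at h1 h2 h3
    have h6 := abs_add_le ((x:EuclideanSpace ℝ (Fin n)) i) ((y:EuclideanSpace ℝ (Fin n)) i)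
    refine mul_le_mul ?_ h1 (abs_nonneg _) (by norm_num)
    push_cast
    linarith
  have h := (hK f (FF_c01 1 0 i i) 2 hL).dist_le_mul (pp i i) (pm i i)
  rw [pp_pm_dist, hproj f (FF_phom 1 0 i i), Real.dist_eq] at h
  simp only [f, FF, pp_val, pm_val] at h
  simp at h
  norm_num at h
  linarith

lemma final_arith (n : ℕ) (hn : 3 ≤ n) (K : ℝ) (h1 : 1 / 2 ≤ K) (h2 : 4 ≤ n → √n ≤ 36 * K) :
    (2 / 5) * ((Real.sqrt 2 - 1) / 3 * (Real.pi / 72)) ^ ((1 : ℝ) / 5)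
      * ((n : ℝ) - 2 * Real.sqrt 2) ^ ((1 : ℝ) / 5) ≤ K := by
  have hn' : (3:ℝ) ≤ n := by exact_mod_cast hn
  have q1 : √2 ≤ 1.4143 := Real.sqrt_le_iff.2 ⟨by norm_num, by norm_num⟩
  have q2 : 1 ≤ √2 := Real.le_sqrt_of_sq_le (by norm_num)
  have p1 := Real.pi_lt_d2
  have p0 := Real.pi_pos
  have c0 : 0 ≤ (Real.sqrt 2 - 1) / 3 * (Real.pi / 72) :=
    mul_nonneg (by linarith) (by positivity)
  have c1 : (Real.sqrt 2 - 1) / 3 * (Real.pi / 72) ≤ 0.00605 := by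
    calc _ ≤ (1.4143 - 1) / 3 * (3.15 / 72 : ℝ) := by
          apply mul_le_mul <;> first | positivity | linarith
      _ ≤ _ := by norm_num
  have d0 : 0 ≤ (n : ℝ) - 2 * √2 := by linarith
  have r5 : ∀ y : ℝ, 0 ≤ y → (y ^ ((1 : ℝ) / 5)) ^ 5 = y := by
    intro y hy
    rw [← Real.rpow_natCast, ← Real.rpow_mul hy]; norm_num
  refine le_of_pow_le_pow_left₀ (by norm_num : 5 ≠ 0) (by linarith) ?_
  rw [mul_pow, mul_pow, r5 _ c0, r5 _ d0]
  have hA : (2 / 5 : ℝ) ^ 5 * ((√2 - 1) / 3 * (Real.pi / 72)) * ((n:ℝ) - 2 * √2) ≤ 0.00007 * n := by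
    apply mul_le_mul _ (by linarith) d0 (by norm_num)
    calc (2 / 5 : ℝ) ^ 5 * ((√2 - 1) / 3 * (Real.pi / 72)) ≤ (2/5:ℝ)^5 * 0.00605 := by gcongr
      _ ≤ _ := by norm_num
  refine hA.trans ?_
  by_cases hc : n ≤ 441
  · have : (n:ℝ) ≤ 441 := by exact_mod_cast hc
    calc 0.00007 * (n:ℝ) ≤ (1/2)^5 := by norm_num; linarith
      _ ≤ K ^ 5 := by gcongr
  · have hs := h2 (by omega)
    have h441 : (441:ℝ) ≤ n := by exact_mod_cast (by omega : 441 ≤ n)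
    have hs21 : 21 ≤ √(n:ℝ) := Real.le_sqrt_of_sq_le (by linarith)
    have hsq : √(n:ℝ) ^ 2 = n := Real.sq_sqrt (by linarith)
    set s := √(n:ℝ)
    have h3 : (21:ℝ) ^ 3 ≤ s ^ 3 := by gcongr
    calc 0.00007 * (n:ℝ) = 0.00007 * s ^ 2 := by rw [hsq]
      _ ≤ (s / 36) ^ 5 := by
        have : (s / 36) ^ 5 = s ^ 2 * (s ^ 3 / 36 ^ 5) := by ring
        rw [this, mul_comm]
        apply mul_le_mul_of_nonneg_left _ (by positivity)
        rw [le_div_iff₀ (by norm_num)]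
        norm_num at h3 ⊢
        linarith
      _ ≤ K ^ 5 := by gcongr; linarith
end

/-- **Theorem A (for `C₀¹`).** If `Q` is any bounded linear projection from
`C₀¹(B_{E_n})` onto `P(²E_n)` (the latter viewed inside functions on the ball via
restriction), and `K` bounds its operator norm with respect to the Lipschitz norm, then
`K ≥ (2/5)·((√2 − 1)/3 · π/72)^{1/5} · (n − 2√2)^{1/5}`. -/
theorem statement0 (n : ℕ) (hn : 3 ≤ n)
    (Q : (↥(UBall (EuclideanSpace ℝ (Fin n))) → ℝ) →ₗ[ℝ]
         (↥(UBall (EuclideanSpace ℝ (Fin n))) → ℝ))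
    (hrange : ∀ f ∈ C01B (EuclideanSpace ℝ (Fin n)), Q f ∈ PhomB 2 (EuclideanSpace ℝ (Fin n)))
    (hproj : ∀ f ∈ PhomB 2 (EuclideanSpace ℝ (Fin n)), Q f = f)
    (K : NNReal)
    (hK : ∀ f ∈ C01B (EuclideanSpace ℝ (Fin n)), ∀ L : NNReal,
      LipschitzWith L f → LipschitzWith (K * L) (Q f)) :
    (2 / 5) * ((Real.sqrt 2 - 1) / 3 * (Real.pi / 72)) ^ ((1 : ℝ) / 5)
      * ((n : ℝ) - 2 * Real.sqrt 2) ^ ((1 : ℝ) / 5) ≤ (K : ℝ) := by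
  exact final_arith n hn K (half_le n hn Q hproj K hK)
    (fun h4 => main_ineq n h4 Q hrange hproj K hK)
end
end

section
/- Let X be an infinite-dimensional Banach space that contains uniformly complemented (ℓ₂ⁿ)_{n=1}^∞, i.e. there are a constant C ≥ 1 and a sequence (F_n)_{n=1}^∞ of subspaces of X such that, for each n, F_n is C-isomorphic to ℓ₂ⁿ and C-complemented in X. Then P(²X) is not complemented in Lip₀(B_X): there is no bounded linear projection from Lip₀(B_X) onto the image of P(²X) under the restriction embedding. -/
open Metric Set Real

noncomputable section

def sgB (b : Bool) : ℝ := if b then 1 else -1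

lemma sgB_sq (b : Bool) : sgB b * sgB b = 1 := by cases b <;> simp [sgB]

lemma sgB_not (b : Bool) : sgB (!b) = - sgB b := by cases b <;> simp [sgB]

lemma sgB_abs (b : Bool) : |sgB b| = 1 := by cases b <;> simp [sgB]

def Ev (n : ℕ) (F : (Fin n → Bool) → ℝ) : ℝ := ((2:ℝ)^n)⁻¹ * ∑ e, F e

lemma Ev_add {n : ℕ} (F G : (Fin n → Bool) → ℝ) :
    Ev n (fun e => F e + G e) = Ev n F + Ev n G := by
  simp [Ev, Finset.sum_add_distrib, mul_add]

lemma Ev_sub {n : ℕ} (F G : (Fin n → Bool) → ℝ) :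
    Ev n (fun e => F e - G e) = Ev n F - Ev n G := by
  simp [Ev, Finset.sum_sub_distrib, mul_sub]

lemma Ev_smul {n : ℕ} (c : ℝ) (F : (Fin n → Bool) → ℝ) :
    Ev n (fun e => c * F e) = c * Ev n F := by
  simp only [Ev, ← Finset.mul_sum]; ring

lemma Ev_sum {n : ℕ} {ι : Type*} (s : Finset ι) (F : ι → (Fin n → Bool) → ℝ) :
    Ev n (fun e => ∑ i ∈ s, F i e) = ∑ i ∈ s, Ev n (F i) := by
  simp only [Ev]; rw [Finset.sum_comm, Finset.mul_sum]

lemma Ev_const (n : ℕ) (c : ℝ) : Ev n (fun _ => c) = c := by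
  simp [Ev]

lemma Ev_mono {n : ℕ} {F G : (Fin n → Bool) → ℝ} (h : ∀ e, F e ≤ G e) : Ev n F ≤ Ev n G := by
  unfold Ev
  exact mul_le_mul_of_nonneg_left (Finset.sum_le_sum fun e _ => h e) (by positivity)

lemma Ev_abs {n : ℕ} (F : (Fin n → Bool) → ℝ) : |Ev n F| ≤ Ev n (fun e => |F e|) := by
  unfold Ev
  rw [abs_mul, abs_of_nonneg (by positivity : (0:ℝ) ≤ ((2:ℝ)^n)⁻¹)]
  exact mul_le_mul_of_nonneg_left (Finset.abs_sum_le_sum_abs _ _) (by positivity)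

lemma Ev_succ {n : ℕ} (F : (Fin (n+1) → Bool) → ℝ) :
    Ev (n+1) F = Ev n (fun e => (F (Fin.cons true e) + F (Fin.cons false e)) / 2) := by
  unfold Ev
  rw [← (Fin.consEquiv (fun _ => Bool)).sum_comp, Fintype.sum_prod_type]
  simp only [Fintype.sum_bool, ← Finset.sum_add_distrib, ← Finset.sum_div]
  rw [pow_succ]; field_simp
  rfl

lemma Ev_flip {n : ℕ} (i : Fin n) (F : (Fin n → Bool) → ℝ)
    (h : ∀ e, F (Function.update e i (!(e i))) = - F e) : Ev n F = 0 := by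
  have hinv : Function.Involutive (fun e : Fin n → Bool => Function.update e i (!(e i))) := by
    intro e; simp
  have : ∑ e, F e = - ∑ e, F e := by
    refine (Equiv.sum_comp (hinv.toPerm _) F).symm.trans ?_
    rw [← Finset.sum_neg_distrib]
    exact Finset.sum_congr rfl fun e _ => h e
  have h0 : ∑ e, F e = 0 := by linarith
  simp [Ev, h0]

/-- The Rademacher sum. -/
def rs {n : ℕ} (z : Fin n → ℝ) (e : Fin n → Bool) : ℝ := ∑ i, z i * sgB (e i)

lemma rs_cons {n : ℕ} (z : Fin (n+1) → ℝ) (b : Bool) (e : Fin n → Bool) :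
    rs z (Fin.cons b e) = z 0 * sgB b + rs (Fin.tail z) e := by
  simp [rs, Fin.sum_univ_succ, Fin.tail]

lemma Ev_rs_sq {n : ℕ} (z : Fin n → ℝ) : Ev n (fun e => rs z e ^ 2) = ∑ i, z i ^ 2 := by
  induction n with
  | zero => simp [Ev, rs]
  | succ n ih =>
    rw [Ev_succ, Fin.sum_univ_succ]
    have := ih (Fin.tail z)
    have h : ∀ e : Fin n → Bool, (rs z (Fin.cons true e) ^ 2 + rs z (Fin.cons false e)^2)/2
        = z 0 ^ 2 + rs (Fin.tail z) e ^ 2 := by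
      intro e; simp only [rs_cons, sgB]; simp; ring
    simp only [h]
    rw [Ev_add, Ev_const, this]; rfl

lemma Ev_rs_four {n : ℕ} (z : Fin n → ℝ) :
    Ev n (fun e => rs z e ^ 4) ≤ 3 * (∑ i, z i ^ 2) ^ 2 := by
  induction n with
  | zero => simp [Ev, rs]
  | succ n ih =>
    rw [Ev_succ, Fin.sum_univ_succ]
    have h4 := ih (Fin.tail z)
    have h2 := Ev_rs_sq (Fin.tail z)
    have h : ∀ e : Fin n → Bool, (rs z (Fin.cons true e) ^ 4 + rs z (Fin.cons false e)^4)/2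
        = z 0 ^ 4 + ((6 * z 0 ^ 2) * rs (Fin.tail z) e ^ 2 + rs (Fin.tail z) e ^ 4) := by
      intro e; simp only [rs_cons, sgB]; simp; ring
    simp only [h]
    rw [Ev_add, Ev_const, Ev_add, Ev_smul, h2]
    have e1 : ∑ i, Fin.tail z i ^ 2 = ∑ i : Fin n, z i.succ ^ 2 := rfl
    rw [e1] at h4 h2 ⊢
    nlinarith [sq_nonneg (z 0 ^ 2)]

lemma Ev_quad {n : ℕ} {i j : Fin n} (hij : i ≠ j) (k l : Fin n) :
    Ev n (fun e => (sgB (e i) * sgB (e j)) * (sgB (e k) * sgB (e l)))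
      = (if k = i ∧ l = j then 1 else 0) + (if k = j ∧ l = i then 1 else 0) := by
  by_cases hkl : k = l
  · subst hkl
    rw [if_neg (by rintro ⟨rfl, h⟩; exact hij h), if_neg (by rintro ⟨rfl, h⟩; exact hij h.symm)]
    simp only [sgB_sq, mul_one, add_zero]
    apply Ev_flip i
    intro e
    simp [Function.update_of_ne hij.symm, sgB_not]
  by_cases hk : k = i ∨ k = j
  · by_cases hl : l = i ∨ l = j
    · rcases hk with rfl | rfl <;> rcases hl with rfl | rfl
      · exact absurd rfl hkl
      · simp only [hij, and_self, if_true]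
        have : ∀ e : Fin n → Bool, (sgB (e k) * sgB (e l)) * (sgB (e k) * sgB (e l)) = 1 := by
          intro e; rw [mul_mul_mul_comm, sgB_sq, sgB_sq, mul_one]
        simp [this, Ev_const]
      · simp only [hij.symm, and_self, if_true]
        have : ∀ e : Fin n → Bool, (sgB (e l) * sgB (e k)) * (sgB (e k) * sgB (e l)) = 1 := by
          intro e; rw [mul_comm (sgB (e k)), mul_mul_mul_comm, sgB_sq, sgB_sq, mul_one]
        simp [this, Ev_const]
      · exact absurd rfl hkl
    · push Not at hl
      rw [if_neg (by rintro ⟨_, h⟩; exact hl.2 h), if_neg (by rintro ⟨_, h⟩; exact hl.1 h), add_zero]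
      apply Ev_flip l
      intro e
      simp [Function.update_of_ne hl.1.symm, Function.update_of_ne hl.2.symm,
        Function.update_of_ne hkl, sgB_not]
  · push Not at hk
    rw [if_neg (by rintro ⟨h, _⟩; exact hk.1 h), if_neg (by rintro ⟨h, _⟩; exact hk.2 h), add_zero]
    apply Ev_flip k
    intro e
    simp [Function.update_of_ne hk.1.symm, Function.update_of_ne hk.2.symm,
      Function.update_of_ne (Ne.symm hkl), sgB_not]

lemma Ev_rs_quad {n : ℕ} (z : Fin n → ℝ) {i j : Fin n} (hij : i ≠ j) :
    Ev n (fun e => sgB (e i) * sgB (e j) * rs z e ^ 2) = 2 * (z i * z j) := by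
  have : ∀ e : Fin n → Bool, sgB (e i) * sgB (e j) * rs z e ^ 2 =
      ∑ k, ∑ l, (z k * z l) * ((sgB (e i) * sgB (e j)) * (sgB (e k) * sgB (e l))) := by
    intro e
    rw [rs, sq, Finset.sum_mul_sum, Finset.mul_sum]
    refine Finset.sum_congr rfl fun k _ => ?_
    rw [Finset.mul_sum]
    refine Finset.sum_congr rfl fun l _ => ?_
    ring
  simp only [this, Ev_sum, Ev_smul, Ev_quad hij]
  simp only [mul_add, Finset.sum_add_distrib, mul_ite, mul_one, mul_zero, ite_and]
  simp
  ring

/-- excess over `M` -/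
def pex (M t : ℝ) : ℝ := max (|t| - M) 0

def hub (M t : ℝ) : ℝ := t ^ 2 - pex M t ^ 2

lemma hub_lip {M : ℝ} (hM : 0 < M) (s t : ℝ) : |hub M s - hub M t| ≤ 2 * M * |s - t| := by
  have h1 : |(|s| - |t|)| ≤ |s - t| := abs_abs_sub_abs_le_abs_sub s t
  refine le_trans ?_ (mul_le_mul_of_nonneg_left h1 (by linarith))
  unfold hub pex
  rw [← sq_abs s, ← sq_abs t]
  generalize ha : |s| = a
  generalize hb : |t| = b
  have ha0 : 0 ≤ a := ha ▸ abs_nonneg s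
  have hb0 : 0 ≤ b := hb ▸ abs_nonneg t
  rcases le_total (a - M) 0 with h | h <;> rcases le_total (b - M) 0 with h' | h' <;>
    simp only [max_eq_left, max_eq_right, h, h'] <;>
    rcases le_total (a - b) 0 with h'' | h'' <;>
    simp only [abs_of_nonpos, abs_of_nonneg, h''] <;> rw [abs_le] <;> constructor <;> nlinarith

lemma pex_sq_lip {M : ℝ} (hM : 0 < M) (s t : ℝ) :
    |pex M s ^ 2 - pex M t ^ 2| ≤ (4 * M)⁻¹ * (|s - t| * (s ^ 2 + t ^ 2)) := by
  have hle : ∀ t, pex M t ≤ (4 * M)⁻¹ * t ^ 2 := by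
    intro t
    refine max_le ?_ (by positivity)
    rw [← sq_abs t, inv_mul_eq_div, le_div_iff₀ (by positivity)]
    nlinarith [sq_nonneg (|t| - 2 * M)]
  have h0 : ∀ t, 0 ≤ pex M t := fun t => le_max_right _ _
  have h1 : |pex M s - pex M t| ≤ |s - t| := by
    refine (abs_max_sub_max_le_abs _ _ _).trans ?_
    rw [sub_sub_sub_cancel_right]
    exact abs_abs_sub_abs_le_abs_sub s t
  rw [sq_sub_sq, abs_mul, abs_of_nonneg (add_nonneg (h0 s) (h0 t))]
  calc _ ≤ ((4 * M)⁻¹ * s ^ 2 + (4 * M)⁻¹ * t ^ 2) * |s - t| :=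
        mul_le_mul (add_le_add (hle s) (hle t)) h1 (abs_nonneg _) (by positivity)
    _ = _ := by ring

lemma rs_sub {n : ℕ} (z w : Fin n → ℝ) (e : Fin n → Bool) : rs z e - rs w e = rs (z - w) e := by
  simp [rs, sub_mul, Finset.sum_sub_distrib]

/-- key averaged estimate -/
lemma Ev_err {n : ℕ} {M C d : ℝ} (hM : 0 < M) (hC : 0 < C) (hd : 0 ≤ d) (z w : Fin n → ℝ)
    (hz : ∑ i, z i ^ 2 ≤ C ^ 2) (hw : ∑ i, w i ^ 2 ≤ C ^ 2)
    (hzw : ∑ i, (z i - w i) ^ 2 ≤ d ^ 2) (i j : Fin n) :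
    |Ev n (fun e => sgB (e i) * sgB (e j) * pex M (rs z e) ^ 2)
      - Ev n (fun e => sgB (e i) * sgB (e j) * pex M (rs w e) ^ 2)| ≤ 2 * C ^ 2 / M * d := by
  rcases hd.eq_or_lt with rfl | hd
  · have : z = w := by
      funext i
      have h0 : ∑ i, (z i - w i) ^ 2 = 0 :=
        le_antisymm (by simpa using hzw) (Finset.sum_nonneg fun i _ => sq_nonneg _)
      have := (Finset.sum_eq_zero_iff_of_nonneg (fun i _ => sq_nonneg (z i - w i))).1 h0 i
        (Finset.mem_univ _)
      nlinarith [pow_eq_zero_iff (two_ne_zero) |>.1 this]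
    subst this; simp
  rw [← Ev_sub]
  refine (Ev_abs _).trans ?_
  have hb : ∀ e : Fin n → Bool, |sgB (e i) * sgB (e j) * pex M (rs z e) ^ 2
      - sgB (e i) * sgB (e j) * pex M (rs w e) ^ 2| ≤
      (C ^ 2 / (8 * M * d)) * rs (z - w) e ^ 2 +
        (d / (4 * M * C ^ 2)) * (rs z e ^ 4 + rs w e ^ 4) := by
    intro e
    rw [← mul_sub, abs_mul, abs_mul, sgB_abs, sgB_abs, one_mul, one_mul]
    refine (pex_sq_lip hM _ _).trans ?_
    rw [← rs_sub]
    generalize rs z e = s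
    generalize rs w e = t
    have h1 : (s^2+t^2)^2 ≤ 2 * (s^4+t^4) := by nlinarith [sq_nonneg (s^2-t^2)]
    have h2 : |s - t| * (s^2+t^2) ≤ C^2/(2*d) * (s-t)^2 + d/(2*C^2) * (s^2+t^2)^2 := by
      rw [← sq_abs (s - t)]
      have : 0 ≤ (C^2*|s-t| - d*(s^2+t^2))^2 / (2*d*C^2) := by positivity
      have e1 : (C^2*|s-t| - d*(s^2+t^2))^2 / (2*d*C^2) =
        C^2/(2*d) * |s-t|^2 + d/(2*C^2) * (s^2+t^2)^2 - |s - t| * (s^2+t^2) := by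
        field_simp; ring
      linarith
    have h3 : d/(2*C^2) * (s^2+t^2)^2 ≤ d/(2*C^2) * (2 * (s^4+t^4)) :=
      mul_le_mul_of_nonneg_left h1 (by positivity)
    calc _ ≤ (4*M)⁻¹ * (C^2/(2*d) * (s-t)^2 + d/(2*C^2) * (2 * (s^4+t^4))) :=
          mul_le_mul_of_nonneg_left (h2.trans (by linarith)) (by positivity)
      _ = _ := by field_simp; ring
  refine (Ev_mono hb).trans ?_
  rw [Ev_add, Ev_smul, Ev_smul, Ev_add, Ev_rs_sq]
  have hz4 : Ev n (fun e => rs z e ^ 4) ≤ 3 * C^4 := (Ev_rs_four z).trans (by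
    have : (∑ i, z i ^ 2)^2 ≤ (C^2)^2 :=
      pow_le_pow_left₀ (Finset.sum_nonneg fun i _ => sq_nonneg _) hz 2
    nlinarith)
  have hw4 : Ev n (fun e => rs w e ^ 4) ≤ 3 * C^4 := (Ev_rs_four w).trans (by
    have : (∑ i, w i ^ 2)^2 ≤ (C^2)^2 :=
      pow_le_pow_left₀ (Finset.sum_nonneg fun i _ => sq_nonneg _) hw 2
    nlinarith)
  calc _ ≤ (C ^ 2 / (8 * M * d)) * d^2 + (d / (4 * M * C ^ 2)) * (3*C^4+3*C^4) :=
        add_le_add (mul_le_mul_of_nonneg_left hzw (by positivity))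
          (mul_le_mul_of_nonneg_left (add_le_add hz4 hw4) (by positivity))
    _ = (13/8) * (C^2 / M * d) := by field_simp; ring
    _ ≤ 2 * (C^2 / M * d) := mul_le_mul_of_nonneg_right (by norm_num) (by positivity)
    _ = _ := by ring

section poly
variable {X : Type*} [NormedAddCommGroup X] [NormedSpace ℝ X]

lemma phom_bilin {f : ↥(UBall X) → ℝ} (hf : f ∈ PhomB 2 X) :
    ∃ B : X →ₗ[ℝ] X →ₗ[ℝ] ℝ, ∀ x : ↥(UBall X), f x = B x x := by
  obtain ⟨M, hM⟩ := hf
  have hup0 : ∀ x y z : X, Function.update ![x, y] 0 z = ![z, y] := by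
    intro x y z; ext i; fin_cases i <;> simp
  have hup1 : ∀ x y z : X, Function.update ![x, y] 1 z = ![x, z] := by
    intro x y z; ext i; fin_cases i <;> simp
  refine ⟨LinearMap.mk₂ ℝ (fun x y => M ![x, y]) ?_ ?_ ?_ ?_, ?_⟩
  · intro x x' y
    have := M.map_update_add ![x, y] 0 x x'
    simpa only [hup0, smul_eq_mul] using this
  · intro c x y
    have := M.map_update_smul ![x, y] 0 c x
    simpa only [hup0, smul_eq_mul] using this
  · intro x y y'
    have := M.map_update_add ![x, y] 1 y y'
    simpa only [hup1, smul_eq_mul] using this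
  · intro c x y
    have := M.map_update_smul ![x, y] 1 c y
    simpa only [hup1, smul_eq_mul] using this
  · intro x
    rw [hM x, LinearMap.mk₂_apply]
    congr 1
    ext i; fin_cases i <;> rfl

lemma exists_scale (x : X) : ∃ c : ℝ, 0 < c ∧ c * ‖x‖ ≤ 1 ∧ c • x ∈ UBall X ∧ (x ≠ 0 → c = ‖x‖⁻¹) := by
  by_cases h : x = 0
  · refine ⟨1, one_pos, by simp [h], by simp [UBall, h], fun h' => absurd h h'⟩
  · have hx : 0 < ‖x‖ := norm_pos_iff.2 h
    refine ⟨‖x‖⁻¹, by positivity, by rw [inv_mul_cancel₀ hx.ne'], ?_, fun _ => rfl⟩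
    simp [UBall, norm_smul, inv_mul_cancel₀ hx.ne']

lemma bilin_bound {f : ↥(UBall X) → ℝ} {B : X →ₗ[ℝ] X →ₗ[ℝ] ℝ} {L : NNReal}
    (hB : ∀ x : ↥(UBall X), f x = B x x) (hf : LipschitzWith L f) (x : X) :
    |B x x| ≤ L * ‖x‖ ^ 2 := by
  by_cases h : x = 0
  · simp [h]
  obtain ⟨c, hc, hcx, hmem, hce⟩ := exists_scale x
  have h1 := hf.dist_le_mul ⟨c • x, hmem⟩ (zeroB X)
  rw [hB, hB, Subtype.dist_eq, Real.dist_eq] at h1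
  simp only [zeroB, map_smul, map_zero, LinearMap.smul_apply, smul_eq_mul, sub_zero,
    dist_zero_right, norm_smul, Real.norm_eq_abs, abs_of_pos hc, abs_mul] at h1
  have hx : 0 < ‖x‖ := norm_pos_iff.2 h
  rw [hce h, inv_mul_cancel₀ hx.ne', mul_one] at h1
  have h2 : |B x x| = ‖x‖^2 * (‖x‖⁻¹ * (‖x‖⁻¹ * |B x x|)) := by field_simp
  rw [h2, mul_comm (L:ℝ)]
  exact mul_le_mul_of_nonneg_left h1 (by positivity)

lemma prod_phom (a b : X →L[ℝ] ℝ) :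
    (fun x : ↥(UBall X) => 2 * (a x * b x)) ∈ PhomB 2 X := by
  refine ⟨(2:ℝ) • (ContinuousMultilinearMap.mkPiAlgebra ℝ (Fin 2) ℝ).compContinuousLinearMap
    ![a, b], fun x => ?_⟩
  simp [Fin.prod_univ_two]

end poly

/-- Main quantitative inequality. -/
lemma core_ineq (X : Type*) [NormedAddCommGroup X] [NormedSpace ℝ X]
    (C : ℝ) (hC : 1 ≤ C) (m n : ℕ) (hn : n = m * m) (F : Submodule ℝ X)
    (T : EuclideanSpace ℝ (Fin n) ≃ₗ[ℝ] F)
    (hT : ∀ v : EuclideanSpace ℝ (Fin n), ‖v‖ ≤ ‖(T v : X)‖ ∧ ‖(T v : X)‖ ≤ C * ‖v‖)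
    (P : X →L[ℝ] X) (hPF : ∀ x : X, P x ∈ F) (hPid : ∀ y ∈ F, P y = y) (hP : ‖P‖ ≤ C)
    (Q : (↥(UBall X) → ℝ) →ₗ[ℝ] (↥(UBall X) → ℝ)) (K : NNReal)
    (hQ1 : ∀ f ∈ Lip0B X, Q f ∈ PhomB 2 X) (hQ2 : ∀ f ∈ PhomB 2 X, Q f = f)
    (hQ3 : ∀ f ∈ Lip0B X, ∀ L : NNReal, LipschitzWith L f → LipschitzWith (K * L) (Q f))
    (M : ℝ) (hM : 0 < M) (hMK : 12 * K * C ^ 5 ≤ M) :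
    ((m:ℝ) * m) * (m * m) ≤ (m * m) * (1 + 4 * K * M * C ^ 3 * m) + 4 * K * M * C ^ 3 * m * (m * m) := by
  have hC0 : 0 < C := by linarith
  have hnR : (n:ℝ) = m * m := by rw [hn]; push_cast; rfl
  -- coordinate map
  obtain ⟨tau, htau⟩ : ∃ tau : X →ₗ[ℝ] EuclideanSpace ℝ (Fin n),
      ∀ x, tau x = T.symm ⟨P x, hPF x⟩ :=
    ⟨T.symm.toLinearMap ∘ₗ (P.toLinearMap.codRestrict F hPF), fun x => rfl⟩
  have htau_norm : ∀ x, ‖tau x‖ ≤ C * ‖x‖ := by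
    intro x
    have h1 := (hT (tau x)).1
    rw [htau, LinearEquiv.apply_symm_apply, ← htau] at h1
    exact h1.trans (P.le_of_opNorm_le hP x)
  have htauT : ∀ v, tau (T v : X) = v := by
    intro v
    rw [htau]
    have : (⟨P (T v : X), hPF _⟩ : F) = T v := Subtype.ext (hPid _ (T v).2)
    rw [this, LinearEquiv.symm_apply_apply]
  have hsq : ∀ z : EuclideanSpace ℝ (Fin n), ∑ i, z i ^ 2 = ‖z‖ ^ 2 := by
    intro z; rw [EuclideanSpace.real_norm_sq_eq]
  have hsgn : ∀ (z : EuclideanSpace ℝ (Fin n)) (e : Fin n → Bool), |rs z e| ≤ m * ‖z‖ := by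
    intro z e
    apply abs_le_of_sq_le_sq _ (by positivity)
    have h1 := sq_sum_le_card_mul_sum_sq (s := Finset.univ) (f := fun i => z i * sgB (e i))
    have h2 : ∀ i, (z i * sgB (e i)) ^ 2 = z i ^ 2 := by
      intro i; rw [mul_pow, sq (sgB _), sgB_sq, mul_one]
    simp only [h2, hsq, Finset.card_univ, Fintype.card_fin] at h1
    rw [rs]
    refine h1.trans (le_of_eq ?_)
    rw [hnR]; ring
  -- test functions
  let f : (Fin n → Bool) → ↥(UBall X) → ℝ := fun e x => hub M (rs (tau (x:X)) e)
  let L1 : NNReal := Real.toNNReal (2 * M * m * C)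
  have hL1 : (L1 : ℝ) = 2 * M * m * C := Real.coe_toNNReal _ (by positivity)
  have hflip : ∀ e, LipschitzWith L1 (f e) := by
    intro e
    refine LipschitzWith.of_dist_le_mul fun x y => ?_
    rw [Real.dist_eq, hL1, Subtype.dist_eq, dist_eq_norm]
    refine (hub_lip hM _ _).trans ?_
    have h1 : rs (tau (x:X)) e - rs (tau (y:X)) e = rs (tau ((x:X) - y)) e := by
      rw [rs_sub, map_sub]; rfl
    rw [h1]
    have h2 := (hsgn (tau ((x:X) - y)) e).trans
      (mul_le_mul_of_nonneg_left (htau_norm _) (by positivity))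
    calc _ ≤ 2 * M * (m * (C * ‖(x:X) - y‖)) := mul_le_mul_of_nonneg_left h2 (by positivity)
      _ = _ := by ring
  have hf0 : ∀ e, f e ∈ Lip0B X := by
    intro e
    refine ⟨⟨L1, hflip e⟩, ?_⟩
    simp [f, zeroB, rs, hub, pex, hM.le]
  choose B hB using fun e => phom_bilin (hQ1 (f e) (hf0 e))
  have hBb : ∀ e x, |B e x x| ≤ K * (2 * M * m * C) * ‖x‖ ^ 2 := by
    intro e x
    have := bilin_bound (hB e) (hQ3 _ (hf0 e) L1 (hflip e)) x
    rwa [NNReal.coe_mul, hL1] at this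
  -- error functions
  let r : Fin n → Fin n → ↥(UBall X) → ℝ := fun i j x =>
    Ev n (fun e => sgB (e i) * sgB (e j) * pex M (rs (tau (x:X)) e) ^ 2)
  let L2 : NNReal := Real.toNNReal (2 * C ^ 3 / M)
  have hL2 : (L2 : ℝ) = 2 * C ^ 3 / M := Real.coe_toNNReal _ (by positivity)
  have hball : ∀ x : ↥(UBall X), ‖tau (x:X)‖ ≤ C := by
    intro x
    have hx : ‖(x:X)‖ ≤ 1 := by simpa [UBall] using x.2
    exact (htau_norm _).trans (by nlinarith)
  have hrlip : ∀ i j, LipschitzWith L2 (r i j) := by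
    intro i j
    refine LipschitzWith.of_dist_le_mul fun x y => ?_
    rw [Real.dist_eq, hL2, Subtype.dist_eq, dist_eq_norm]
    have h := Ev_err (d := C * ‖(x:X) - y‖) hM hC0 (by positivity)
      (tau (x:X)) (tau (y:X))
      (by rw [hsq]; exact pow_le_pow_left₀ (norm_nonneg _) (hball x) 2)
      (by rw [hsq]; exact pow_le_pow_left₀ (norm_nonneg _) (hball y) 2)
      (by
        have h1 := hsq (tau ((x:X) - y))
        rw [map_sub] at h1
        have h2 : ∑ i, (tau (x:X) i - tau (y:X) i) ^ 2 = ‖tau (x:X) - tau (y:X)‖ ^ 2 := h1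
        rw [h2, ← map_sub]
        exact pow_le_pow_left₀ (norm_nonneg _) (htau_norm _) 2) i j
    refine h.trans (le_of_eq ?_)
    field_simp
  have hr0 : ∀ i j, r i j ∈ Lip0B X := by
    intro i j
    refine ⟨⟨L2, hrlip i j⟩, ?_⟩
    simp [r, zeroB, rs, pex, hM.le, Ev]
  choose R hR using fun i j => phom_bilin (hQ1 (r i j) (hr0 i j))
  have hRb : ∀ i j x, |R i j x x| ≤ K * (2 * C ^ 3 / M) * ‖x‖ ^ 2 := by
    intro i j x
    have := bilin_bound (hR i j) (hQ3 _ (hr0 i j) L2 (hrlip i j)) x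
    rwa [NNReal.coe_mul, hL2] at this
  -- coordinates as continuous functionals
  have hcoord : ∀ i, ∃ a : X →L[ℝ] ℝ, ∀ x, a x = tau x i := by
    intro i
    refine ⟨LinearMap.mkContinuous
      ((EuclideanSpace.proj i : EuclideanSpace ℝ (Fin n) →L[ℝ] ℝ).toLinearMap ∘ₗ tau) C ?_,
      fun x => rfl⟩
    intro x
    refine le_trans ?_ (htau_norm x)
    exact PiLp.norm_apply_le (tau x) i
  choose a ha using hcoord
  -- identity on the ball
  have hid : ∀ i j, i ≠ j → ∀ x : X,
      Ev n (fun e => sgB (e i) * sgB (e j) * B e x x) = 2 * (tau x i * tau x j) - R i j x x := by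
    intro i j hij
    have hfun : ((2:ℝ)^n)⁻¹ • ∑ e, (sgB (e i) * sgB (e j)) • f e
        = (fun x : ↥(UBall X) => 2 * (a i x * a j x)) - r i j := by
      funext x
      simp only [Pi.smul_apply, Finset.sum_apply, Pi.sub_apply, smul_eq_mul, ha]
      rw [← Ev_rs_quad (tau (x:X)) hij]
      simp only [r]
      rw [← Ev_sub, Ev]
      congr 1
      refine Finset.sum_congr rfl fun e _ => ?_
      simp only [f, hub]; ring
    have hball : ∀ x : ↥(UBall X),
        Ev n (fun e => sgB (e i) * sgB (e j) * B e x x)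
          = 2 * (tau (x:X) i * tau (x:X) j) - R i j x x := by
      intro x
      have h1 := congrFun (congrArg Q hfun) x
      rw [map_sub, hQ2 _ (prod_phom _ _), map_smul, map_sum] at h1
      simp only [map_smul, Pi.smul_apply, Finset.sum_apply, Pi.sub_apply, smul_eq_mul, ha,
        hB, hR] at h1
      exact h1
    intro x
    obtain ⟨c, hc, _, hmem, _⟩ := exists_scale x
    have h1 := hball ⟨c • x, hmem⟩
    simp only [map_smul, LinearMap.smul_apply, smul_eq_mul, PiLp.smul_apply] at h1
    have h2 : ∀ e : Fin n → Bool, sgB (e i) * sgB (e j) * (c * (c * B e x x)) =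
        (c * c) * (sgB (e i) * sgB (e j) * B e x x) := fun e => by ring
    simp only [h2, Ev_smul] at h1
    have hcc : c * c ≠ 0 := by positivity
    apply mul_left_cancel₀ hcc
    rw [h1]; ring
  -- the basis vectors
  let u : Fin n → X := fun i => (T (EuclideanSpace.single i 1) : X)
  have hu : ∀ i, ‖u i‖ ≤ C := by
    intro i
    have := (hT (EuclideanSpace.single i 1)).2
    simpa using this
  have htu : ∀ i j, tau (u i) j = if j = i then 1 else 0 := by
    intro i j
    simp only [u, htauT]
    simp [Pi.single_apply]
  have hu2 : ∀ i, ‖u i‖ ^ 2 ≤ C ^ 2 := fun i => pow_le_pow_left₀ (norm_nonneg _) (hu i) 2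
  have hoff : ∀ i j, i ≠ j →
      1 ≤ Ev n (fun e => sgB (e i) * sgB (e j) * (B e (u i) (u j) + B e (u j) (u i))) := by
    intro i j hij
    have e1 := hid i j hij (u i + u j)
    have e2 := hid i j hij (u i)
    have e3 := hid i j hij (u j)
    simp only [map_add, PiLp.add_apply, htu, hij, hij.symm, if_true, if_false] at e1 e2 e3
    have hsum : Ev n (fun e => sgB (e i) * sgB (e j) * (B e (u i) (u j) + B e (u j) (u i)))
        = 2 - (R i j (u i + u j) (u i + u j) - R i j (u i) (u i) - R i j (u j) (u j)) := by
      have : ∀ e : Fin n → Bool, sgB (e i) * sgB (e j) * (B e (u i) (u j) + B e (u j) (u i)) =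
        (sgB (e i) * sgB (e j) * (B e (u i) + B e (u j)) (u i) +
          sgB (e i) * sgB (e j) * (B e (u i) + B e (u j)) (u j)) -
          sgB (e i) * sgB (e j) * B e (u i) (u i) - sgB (e i) * sgB (e j) * B e (u j) (u j) := by
        intro e; simp only [LinearMap.add_apply]; ring
      simp only [this]
      rw [Ev_sub, Ev_sub, e2, e3]
      simp only [← mul_add]
      rw [e1]
      simp only [map_add, LinearMap.add_apply]
      ring
    rw [hsum]
    have b1 := abs_le.1 (hRb i j (u i + u j))
    have b2 := abs_le.1 (hRb i j (u i))
    have b3 := abs_le.1 (hRb i j (u j))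
    have hpos : 0 ≤ K * (2 * C ^ 3 / M) := by positivity
    have n1 : ‖u i + u j‖ ^ 2 ≤ 4 * C ^ 2 := by
      have h1 : ‖u i + u j‖ ≤ 2 * C := (norm_add_le _ _).trans (by linarith [hu i, hu j])
      calc _ ≤ (2 * C) ^ 2 := pow_le_pow_left₀ (norm_nonneg _) h1 2
        _ = _ := by ring
    have c1 := mul_le_mul_of_nonneg_left n1 hpos
    have c2 := mul_le_mul_of_nonneg_left (hu2 i) hpos
    have c3 := mul_le_mul_of_nonneg_left (hu2 j) hpos
    have hfin : K * (2 * C ^ 3 / M) * (6 * C ^ 2) ≤ 1 := by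
      have : K * (2 * C ^ 3 / M) * (6 * C ^ 2) = (12 * K * C ^ 5) / M := by field_simp; ring
      rw [this]; exact div_le_one_of_le₀ hMK hM.le
    linarith [b1.2, b2.1, b3.1]
  have hdiag : ∀ i, -(4 * K * M * C ^ 3 * m) ≤
      Ev n (fun e => sgB (e i) * sgB (e i) * (B e (u i) (u i) + B e (u i) (u i))) := by
    intro i
    rw [← Ev_const n (-(4 * K * M * C ^ 3 * m))]
    apply Ev_mono
    intro e
    rw [sgB_sq, one_mul]
    have b := (abs_le.1 (hBb e (u i))).1
    have c := mul_le_mul_of_nonneg_left (hu2 i) (by positivity : 0 ≤ K * (2 * M * m * C))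
    have : K * (2 * M * m * C) * C ^ 2 = 2 * K * M * C ^ 3 * m := by ring
    linarith
  -- total sum
  have htot : ∑ i, ∑ j, Ev n (fun e => sgB (e i) * sgB (e j) * (B e (u i) (u j) + B e (u j) (u i)))
      ≤ 4 * K * M * C ^ 3 * m * (m * m) := by
    simp only [← Ev_sum]
    rw [← Ev_const n (4 * K * M * C ^ 3 * m * (m * m))]
    apply Ev_mono
    intro e
    let v : EuclideanSpace ℝ (Fin n) := ∑ i, sgB (e i) • EuclideanSpace.single i (1:ℝ)
    have hv : (T v : X) = ∑ i, sgB (e i) • u i := by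
      simp [v, u, map_sum]
    have hvi : ∀ i, v i = sgB (e i) := by
      intro i; simp [v, Pi.single_apply]
    have hvn : ‖v‖ ^ 2 = m * m := by
      rw [← hsq]
      simp only [hvi, sq, sgB_sq]
      simp [hnR]
    have hTv : ‖(T v : X)‖ ^ 2 ≤ C ^ 2 * (m * m) := by
      rw [← hvn, ← mul_pow]
      exact pow_le_pow_left₀ (norm_nonneg _) (hT v).2 2
    have hBv : B e (T v) (T v) = ∑ i, ∑ j, sgB (e i) * sgB (e j) * B e (u i) (u j) := by
      rw [hv]
      simp only [map_sum, map_smul, LinearMap.sum_apply, LinearMap.smul_apply, smul_eq_mul,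
        Finset.mul_sum]
      rw [Finset.sum_comm]
      refine Finset.sum_congr rfl fun i _ => Finset.sum_congr rfl fun j _ => ?_
      ring
    have hBv' : B e (T v) (T v) = ∑ i, ∑ j, sgB (e i) * sgB (e j) * B e (u j) (u i) := by
      rw [hBv, Finset.sum_comm]
      refine Finset.sum_congr rfl fun i _ => Finset.sum_congr rfl fun j _ => ?_
      ring
    have hs : ∑ i, ∑ j, sgB (e i) * sgB (e j) * (B e (u i) (u j) + B e (u j) (u i))
        = B e (T v) (T v) + B e (T v) (T v) := by
      nth_rewrite 1 [hBv]
      rw [hBv']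
      simp only [← Finset.sum_add_distrib, mul_add]
    rw [hs]
    have b := (abs_le.1 (hBb e (T v))).2
    have c := mul_le_mul_of_nonneg_left hTv (by positivity : 0 ≤ K * (2 * M * m * C))
    have : K * (2 * M * m * C) * (C ^ 2 * (m * m)) = 2 * K * M * C ^ 3 * m * (m * m) := by ring
    linarith
  have hlow : ∑ i : Fin n, ∑ j : Fin n, ((1:ℝ) - if i = j then (1 + 4 * K * M * C ^ 3 * m) else 0) ≤
      ∑ i, ∑ j, Ev n (fun e => sgB (e i) * sgB (e j) * (B e (u i) (u j) + B e (u j) (u i))) := by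
    refine Finset.sum_le_sum fun i _ => Finset.sum_le_sum fun j _ => ?_
    by_cases hij : i = j
    · subst hij
      rw [if_pos rfl]
      linarith [hdiag i]
    · rw [if_neg hij, sub_zero]
      exact hoff i j hij
  have hcalc : ∑ i : Fin n, ∑ j : Fin n, ((1:ℝ) - if i = j then (1 + 4 * K * M * C ^ 3 * m) else 0)
      = ((m:ℝ) * m) * (m * m) - (m * m) * (1 + 4 * K * M * C ^ 3 * m) := by
    simp only [Finset.sum_sub_distrib, Finset.sum_ite_eq, Finset.mem_univ, if_true,
      Finset.sum_const, Finset.card_univ, Fintype.card_fin, nsmul_eq_mul, hnR]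
    ring
  linarith

/-- **Theorem B, first clause.** If an infinite-dimensional Banach space `X` contains
uniformly complemented `ℓ₂ⁿ`'s, then `P(²X)` is not complemented in `Lip₀(B_X)`:
there is no Lipschitz-norm-bounded linear projection from `Lip₀(B_X)` onto the image
of `P(²X)` under the restriction embedding. -/
theorem statement2 (X : Type*) [NormedAddCommGroup X] [NormedSpace ℝ X] [CompleteSpace X]
    (hinf : ¬ FiniteDimensional ℝ X)
    (C : ℝ) (hC : 1 ≤ C)
    (hunif : ∀ n : ℕ, ∃ F : Submodule ℝ X,
      (∃ T : EuclideanSpace ℝ (Fin n) ≃ₗ[ℝ] F,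
        ∀ v : EuclideanSpace ℝ (Fin n), ‖v‖ ≤ ‖(T v : X)‖ ∧ ‖(T v : X)‖ ≤ C * ‖v‖) ∧
      (∃ P : X →L[ℝ] X, (∀ x : X, P x ∈ F) ∧ (∀ y ∈ F, P y = y) ∧ ‖P‖ ≤ C)) :
    ¬ ∃ (Q : (↥(UBall X) → ℝ) →ₗ[ℝ] (↥(UBall X) → ℝ)) (K : NNReal),
      (∀ f ∈ Lip0B X, Q f ∈ PhomB 2 X) ∧ (∀ f ∈ PhomB 2 X, Q f = f) ∧
      (∀ f ∈ Lip0B X, ∀ L : NNReal, LipschitzWith L f → LipschitzWith (K * L) (Q f)) := by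
  rintro ⟨Q, K, hQ1, hQ2, hQ3⟩
  have hC0 : 0 < C := by linarith
  obtain ⟨M, hM, hMK⟩ : ∃ M : ℝ, 0 < M ∧ 12 * K * C ^ 5 ≤ M :=
    ⟨12 * K * C ^ 5 + 1, by positivity, by linarith⟩
  obtain ⟨m, hm⟩ := exists_nat_gt (8 * K * M * C ^ 3 + 1)
  obtain ⟨F, ⟨T, hT⟩, P, hPF, hPid, hP⟩ := hunif (m * m)
  have h := core_ineq X C hC m (m * m) rfl F T hT P hPF hPid hP Q K hQ1 hQ2 hQ3 M hM hMK
  have hD : 0 ≤ K * M * C ^ 3 := by positivity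
  have hm1 : (1:ℝ) < m := by linarith
  have h2 : (m:ℝ) * m ≤ 1 + 8 * K * M * C ^ 3 * m := by
    have hmm : (0:ℝ) < m * m := by positivity
    apply le_of_mul_le_mul_left _ hmm
    linarith
  nlinarith
end
end
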